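/- Let h ⊆ L be a finite-dimensional Lie subalgebra (for the Lagrange bracket) that is graded, i.e. h = ⊕_p (h ∩ L_p), with h ∩ L_{−2} = ℝ·1, h ∩ L_{−1} = span{x, z}, and such that the representation of h₀ := h ∩ L₀ on span{x, z} given by w ↦ {u, w} is irreducible. Then h is isomorphic, by a Lie algebra isomorphism carrying h ∩ L_p onto the degree-p component for every p, to exactly one of the following graded subalgebras of L: (1°) span{1, x, y, z, x², xz, z², x(2y−xz), z(2y−xz), (2y−xz)²}; (2°) span{1, x, y, z, x², xz, z²}; (3°) span{1, x, z, x², xz, z²}; (4°) span{1, x, z, x²+z², 2y−xz, x(x²+z²)−2z(2y−xz), z(x²+z²)+2x(2y−xz), (x²+z²)²+4(2y−xz)²}; (5°) span{1, x, z, x²+z², 2y−xz}; (6°) span{1, x, z, x²+z²+α(2y−xz)} for a unique α ≥ 0. -/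

import Mathlib

noncomputable section

open MvPolynomial

/-- The polynomial algebra `L = ℝ[x, y, z]`, with `x = X 0`, `y = X 1`, `z = X 2`. -/
abbrev PL : Type := MvPolynomial (Fin 3) ℝ

/-- The Lagrange bracket
`{f,g} = f_x g_z − f_z g_x + z (f_y g_z − f_z g_y) + f g_y − g f_y` on `L`. -/
noncomputable def lagr (f g : PL) : PL :=
  pderiv 0 f * pderiv 2 g - pderiv 2 f * pderiv 0 g
    + X 2 * (pderiv 1 f * pderiv 2 g - pderiv 2 f * pderiv 1 g)
    + f * pderiv 1 g - g * pderiv 1 f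

/-- `L_p`: the span of the monomials of total weight `p + 2`, where the variables
`x, y, z` have weights `1, 2, 1` respectively. -/
def Lgrade (p : ℤ) : Submodule ℝ PL where
  carrier := {f | ∀ m ∈ f.support, (m 0 : ℤ) + 2 * m 1 + m 2 = p + 2}
  add_mem' := fun {f g} hf hg m hm => by
    rcases Finset.mem_union.mp (MvPolynomial.support_add hm) with hh | hh
    · exact hf m hh
    · exact hg m hh
  zero_mem' := by
    intro m hm
    simp [MvPolynomial.support_zero] at hm
  smul_mem' := fun c f hf m hm => hf m (MvPolynomial.support_smul hm)

/-- The six candidate graded contact subalgebras of `L` (cases `1°`–`5°` indexed by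
`Fin 5`, and the family `6°` indexed by the real parameter `α`). -/
noncomputable def Tgt : Fin 5 ⊕ ℝ → Submodule ℝ PL
  | Sum.inl i =>
      ![Submodule.span ℝ
          {1, X 0, X 1, X 2, X 0 ^ 2, X 0 * X 2, X 2 ^ 2,
            X 0 * (2 * X 1 - X 0 * X 2), X 2 * (2 * X 1 - X 0 * X 2),
            (2 * X 1 - X 0 * X 2) ^ 2},
        Submodule.span ℝ {1, X 0, X 1, X 2, X 0 ^ 2, X 0 * X 2, X 2 ^ 2},
        Submodule.span ℝ {1, X 0, X 2, X 0 ^ 2, X 0 * X 2, X 2 ^ 2},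
        Submodule.span ℝ
          {1, X 0, X 2, X 0 ^ 2 + X 2 ^ 2, 2 * X 1 - X 0 * X 2,
            X 0 * (X 0 ^ 2 + X 2 ^ 2) - 2 * X 2 * (2 * X 1 - X 0 * X 2),
            X 2 * (X 0 ^ 2 + X 2 ^ 2) + 2 * X 0 * (2 * X 1 - X 0 * X 2),
            (X 0 ^ 2 + X 2 ^ 2) ^ 2 + 4 * (2 * X 1 - X 0 * X 2) ^ 2},
        Submodule.span ℝ {1, X 0, X 2, X 0 ^ 2 + X 2 ^ 2, 2 * X 1 - X 0 * X 2}] i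
  | Sum.inr α =>
      Submodule.span ℝ
        {1, X 0, X 2, X 0 ^ 2 + X 2 ^ 2 + C α * (2 * X 1 - X 0 * X 2)}

set_option linter.unusedSimpArgs false

set_option linter.unusedSimpArgs false

/-- The grading element `2y - xz`. -/
abbrev UU : PL := 2 * X 1 - X 0 * X 2

lemma C_two : (C 2 : PL) = 2 := map_ofNat C 2

lemma pd_comm (i j : Fin 3) (f : PL) : pderiv i (pderiv j f) = pderiv j (pderiv i f) := by
  have : ⁅(pderiv i : Derivation ℝ PL PL), (pderiv j : Derivation ℝ PL PL)⁆ = 0 := by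
    apply MvPolynomial.derivation_ext
    intro k
    simp [Derivation.commutator_apply, pderiv_X, Pi.single_apply]
    split_ifs <;> simp
  have h2 := congrArg (fun D => D f) this
  simp [Derivation.commutator_apply] at h2
  exact sub_eq_zero.mp h2

lemma lagr_jac (f g k : PL) : lagr f (lagr g k) = lagr (lagr f g) k + lagr g (lagr f k) := by
  unfold lagr
  simp only [map_add, map_sub, Derivation.leibniz, smul_eq_mul, pderiv_X, Pi.single_apply]
  rw [pd_comm 1 0 f, pd_comm 2 0 f, pd_comm 2 1 f, pd_comm 1 0 g, pd_comm 2 0 g, pd_comm 2 1 g,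
    pd_comm 1 0 k, pd_comm 2 0 k, pd_comm 2 1 k]
  simp
  ring

lemma lagr_add_right (f g k : PL) : lagr f (g + k) = lagr f g + lagr f k := by
  unfold lagr; simp only [map_add]; ring

lemma lagr_sub_right (f g k : PL) : lagr f (g - k) = lagr f g - lagr f k := by
  unfold lagr; simp only [map_sub]; ring

lemma lagr_C_right (f g : PL) (c : ℝ) : lagr f (C c * g) = C c * lagr f g := by
  unfold lagr; simp [Derivation.leibniz]; ring

lemma lagr_C_left (f g : PL) (c : ℝ) : lagr (C c * f) g = C c * lagr f g := by
  unfold lagr; simp [Derivation.leibniz]; ring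

lemma lagr_add_left (f g k : PL) : lagr (f + g) k = lagr f k + lagr g k := by
  unfold lagr; simp only [map_add]; ring

lemma lagr_one (f : PL) : lagr 1 f = pderiv 1 f := by
  unfold lagr; simp

lemma lagr_x (f : PL) : lagr (X 0) f = pderiv 2 f + X 0 * pderiv 1 f := by
  unfold lagr; simp [pderiv_X, Pi.single_apply]

lemma lagr_z (f : PL) : lagr (X 2) f = - pderiv 0 f := by
  unfold lagr; simp [pderiv_X, Pi.single_apply]

lemma pd_two (i : Fin 3) : pderiv i (2 : PL) = 0 := by
  rw [← C_two, pderiv_C]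

lemma lagr_U (f : PL) : lagr UU f =
    X 0 * pderiv 0 f + 2 * (X 1 * pderiv 1 f) + X 2 * pderiv 2 f - 2 * f := by
  unfold lagr UU; simp [Derivation.leibniz, pderiv_X, Pi.single_apply, pd_two]; ring

lemma coeff_X_pd (i : Fin 3) (f : PL) (m : Fin 3 →₀ ℕ) :
    coeff m (X i * pderiv i f) = m i * coeff m f := by
  induction f using MvPolynomial.induction_on' with
  | monomial u a =>
    rw [X_mul_pderiv_monomial, ← Nat.cast_smul_eq_nsmul ℝ, coeff_smul, coeff_monomial]
    split_ifs with hh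
    · subst hh; simp
    · simp
  | add p q hp hq => simp [mul_add, hp, hq]

lemma mem_Lgrade (p : ℤ) (f : PL) : f ∈ Lgrade p ↔ lagr UU f = C (p : ℝ) * f := by
  have key : ∀ m, coeff m (lagr UU f) = ((m 0 : ℝ) + 2 * m 1 + m 2 - 2) * coeff m f := by
    intro m
    rw [lagr_U, ← C_two]
    simp only [coeff_add, coeff_sub, coeff_C_mul, coeff_X_pd]
    ring
  constructor
  · intro hf
    ext m
    rw [key, coeff_C_mul]
    by_cases hm : coeff m f = 0
    · simp [hm]
    · have := hf m (by simpa [mem_support_iff] using hm)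
      have h3 : (m 0 : ℝ) + 2 * m 1 + m 2 = p + 2 := by exact_mod_cast this
      rw [h3]; ring
  · intro hf m hm
    have h1 := key m
    rw [hf, coeff_C_mul] at h1
    have h2 : coeff m f ≠ 0 := by simpa [mem_support_iff] using hm
    have h3 := mul_right_cancel₀ h2 h1
    have h4 : (m 0 : ℝ) + 2 * m 1 + m 2 = p + 2 := by linarith
    exact_mod_cast h4

lemma Lgrade_neg {p : ℤ} (hp : p < -2) {f : PL} (hf : f ∈ Lgrade p) : f = 0 := by
  rw [← support_eq_empty, Finset.eq_empty_iff_forall_notMem]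
  intro m hm
  have := hf m hm
  omega

lemma lagr_grade {p q : ℤ} {f g : PL} (hf : f ∈ Lgrade p) (hg : g ∈ Lgrade q) :
    lagr f g ∈ Lgrade (p + q) := by
  rw [mem_Lgrade] at *
  rw [lagr_jac, hf, hg, lagr_C_left, lagr_C_right]
  push_cast; simp; ring

/-- Reconstruction of a homogeneous element from its brackets. -/
lemma recon {p : ℤ} {f : PL} (hf : f ∈ Lgrade p) :
    C ((p : ℝ) + 2) * f = UU * lagr 1 f + X 2 * lagr (X 0) f - X 0 * lagr (X 2) f := by
  rw [mem_Lgrade, lagr_U] at hf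
  rw [lagr_one, lagr_x, lagr_z]
  have : (C ((p : ℝ) + 2) : PL) = C (p : ℝ) + 2 := by rw [C_add, C_two]
  rw [this]
  linear_combination -hf

lemma lagr_xz : lagr (X 0) (X 2) = 1 := by
  rw [lagr_x]; simp [pderiv_X, Pi.single_apply]

lemma lagr_one_eq (f : PL) : lagr 1 f = lagr (X 0) (lagr (X 2) f) - lagr (X 2) (lagr (X 0) f) := by
  rw [lagr_jac (X 0) (X 2), lagr_xz]; ring

lemma transit {p : ℤ} (hp : -2 < p) {f : PL} (hf : f ∈ Lgrade p) (h1 : lagr (X 0) f = 0)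
    (h2 : lagr (X 2) f = 0) : f = 0 := by
  have h3 := recon hf
  have h0 : ∀ g : PL, lagr g 0 = 0 := by intro g; unfold lagr; simp
  rw [lagr_one_eq, h1, h2, h0, h0] at h3
  simp at h3
  rcases h3 with h3 | h3
  · exfalso
    have : ((p : ℝ) + 2) = 0 := by
      have h4 : (C ((p : ℝ) + 2) : PL) = C 0 := by simpa using h3
      exact C_injective _ _ h4
    have h5 : (p : ℤ) + 2 = 0 := by exact_mod_cast this
    omega
  · exact h3

lemma x_grade : (X 0 : PL) ∈ Lgrade (-1) := by
  rw [mem_Lgrade, lagr_U]; simp [pderiv_X, Pi.single_apply]; ring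

lemma z_grade : (X 2 : PL) ∈ Lgrade (-1) := by
  rw [mem_Lgrade, lagr_U]; simp [pderiv_X, Pi.single_apply]; ring

lemma one_grade : (1 : PL) ∈ Lgrade (-2) := by
  rw [mem_Lgrade, lagr_U]; simp [C_two]

/-- The standing hypotheses on `h`, without irreducibility and finite-dimensionality. -/
structure Good (h : Submodule ℝ PL) : Prop where
  closed : ∀ u ∈ h, ∀ v ∈ h, lagr u v ∈ h
  graded : h = ⨆ p : ℤ, h ⊓ Lgrade p
  m2 : h ⊓ Lgrade (-2) = Submodule.span ℝ ({1} : Set PL)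
  m1 : h ⊓ Lgrade (-1) = Submodule.span ℝ ({X 0, X 2} : Set PL)

namespace Good

variable {h : Submodule ℝ PL}

lemma one (H : Good h) : (1 : PL) ∈ h := by
  have : (1 : PL) ∈ h ⊓ Lgrade (-2) := by rw [H.m2]; exact Submodule.subset_span (by simp)
  exact this.1

lemma x (H : Good h) : (X 0 : PL) ∈ h := by
  have : (X 0 : PL) ∈ h ⊓ Lgrade (-1) := by rw [H.m1]; exact Submodule.subset_span (by simp)
  exact this.1

lemma z (H : Good h) : (X 2 : PL) ∈ h := by
  have : (X 2 : PL) ∈ h ⊓ Lgrade (-1) := by rw [H.m1]; exact Submodule.subset_span (by simp)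
  exact this.1

lemma cmul {f : PL} (hf : f ∈ h) (c : ℝ) : C c * f ∈ h := by
  rw [← smul_eq_C_mul]; exact h.smul_mem c hf

lemma of_cmul {f : PL} {c : ℝ} (hc : c ≠ 0) (hf : C c * f ∈ h) : f ∈ h := by
  have := cmul hf c⁻¹
  rwa [← mul_assoc, ← C_mul, inv_mul_cancel₀ hc, C_1, one_mul] at this

lemma brx (H : Good h) {p : ℤ} {f : PL} (hf : f ∈ h ⊓ Lgrade p) :
    lagr (X 0) f ∈ h ⊓ Lgrade (p - 1) := by
  refine ⟨H.closed _ H.x _ hf.1, ?_⟩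
  have := lagr_grade x_grade hf.2
  rwa [show -1 + p = p - 1 by ring] at this

lemma brz (H : Good h) {p : ℤ} {f : PL} (hf : f ∈ h ⊓ Lgrade p) :
    lagr (X 2) f ∈ h ⊓ Lgrade (p - 1) := by
  refine ⟨H.closed _ H.z _ hf.1, ?_⟩
  have := lagr_grade z_grade hf.2
  rwa [show -1 + p = p - 1 by ring] at this

lemma br1 (H : Good h) {p : ℤ} {f : PL} (hf : f ∈ h ⊓ Lgrade p) :
    lagr 1 f ∈ h ⊓ Lgrade (p - 2) := by
  refine ⟨H.closed _ H.one _ hf.1, ?_⟩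
  have := lagr_grade one_grade hf.2
  rwa [show -2 + p = p - 2 by ring] at this

/-- If `h_k = 0` then `h_p = 0` for `p ≥ k`. -/
lemma vanish (H : Good h) {k : ℤ} (hk : -2 < k) (h0 : ∀ f ∈ h ⊓ Lgrade k, f = 0) {p : ℤ}
    (hp : k ≤ p) : ∀ f ∈ h ⊓ Lgrade p, f = 0 := by
  induction p, hp using Int.leInduction with
  | base => exact h0
  | succ n hn ih =>
    intro f hf
    have h1 := H.brx hf
    have h2 := H.brz hf
    rw [show n + 1 - 1 = n by ring] at h1 h2
    exact transit (by omega) hf.2 (ih _ h1) (ih _ h2)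

lemma form_m2 (H : Good h) {f : PL} (hf : f ∈ h ⊓ Lgrade (-2)) : ∃ a : ℝ, f = C a := by
  rw [H.m2, Submodule.mem_span_singleton] at hf
  obtain ⟨a, rfl⟩ := hf
  exact ⟨a, by rw [smul_eq_C_mul, mul_one]⟩

lemma form_m1 (H : Good h) {f : PL} (hf : f ∈ h ⊓ Lgrade (-1)) :
    ∃ a b : ℝ, f = C a * X 0 + C b * X 2 := by
  rw [H.m1, Submodule.mem_span_pair] at hf
  obtain ⟨a, b, rfl⟩ := hf
  exact ⟨a, b, by rw [smul_eq_C_mul, smul_eq_C_mul]⟩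

end Good

lemma of_C_mul_eq {f g : PL} {c : ℝ} (hc : c ≠ 0) (hfg : C c * f = g) : f = C c⁻¹ * g := by
  rw [← hfg, ← mul_assoc, ← C_mul, inv_mul_cancel₀ hc, C_1, one_mul]

lemma Good.form_0 {h : Submodule ℝ PL} (H : Good h) {f : PL} (hf : f ∈ h ⊓ Lgrade 0) :
    ∃ a b c d : ℝ, f = C a * X 0 ^ 2 + C b * (X 0 * X 2) + C c * X 2 ^ 2 + C d * UU := by
  obtain ⟨a1, a2, ha⟩ := H.form_m1 (H.brx hf)
  obtain ⟨b1, b2, hb⟩ := H.form_m1 (H.brz hf)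
  obtain ⟨k, hk⟩ := H.form_m2 (H.br1 hf)
  have h1 := recon hf.2
  rw [ha, hb, hk] at h1
  have h2 := of_C_mul_eq (by norm_num) h1
  refine ⟨-b1 / 2, (a1 - b2) / 2, a2 / 2, k / 2, ?_⟩
  rw [h2]
  simp only [div_eq_mul_inv, C_mul, C_neg, C_sub]
  norm_num
  ring


lemma chain_rule (g : Fin 3 → PL) (i : Fin 3) (f : PL) :
    pderiv i (aeval g f) = ∑ j, aeval g (pderiv j f) * pderiv i (g j) := by
  induction f using MvPolynomial.induction_on with
  | C a => simp [algebraMap_eq]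
  | add p q hp hq => simp only [map_add, hp, hq, add_mul, Finset.sum_add_distrib]
  | mul_X p n hp =>
    have h1 : ∀ j : Fin 3, aeval g (pderiv j (p * X n)) * pderiv i (g j) =
        g n * (aeval g (pderiv j p) * pderiv i (g j)) +
          (if j = n then aeval g p * pderiv i (g n) else 0) := by
      intro j
      simp only [Derivation.leibniz, smul_eq_mul, map_add, map_mul, aeval_X, pderiv_X,
        Pi.single_apply]
      by_cases hj : j = n
      · subst hj; simp; ring
      · simp [hj, Ne.symm hj]; ring
    simp only [h1, Finset.sum_add_distrib, ← Finset.mul_sum, ← hp]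
    simp [Derivation.leibniz]
    ring

/-- The substitution `x ↦ x + s z`, `y ↦ μ (y + s z² / 2)`, `z ↦ μ z`. -/
def subst (s μ : ℝ) : PL →ₐ[ℝ] PL :=
  aeval ![X 0 + C s * X 2, C μ * (X 1 + C (s / 2) * X 2 ^ 2), C μ * X 2]

lemma subst_x (s μ : ℝ) : subst s μ (X 0) = X 0 + C s * X 2 := by simp [subst]
lemma subst_y (s μ : ℝ) : subst s μ (X 1) = C μ * (X 1 + C (s / 2) * X 2 ^ 2) := by simp [subst]
lemma subst_z (s μ : ℝ) : subst s μ (X 2) = C μ * X 2 := by simp [subst]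
lemma subst_C (s μ c : ℝ) : subst s μ (C c) = C c := by simp [subst, algebraMap_eq]

lemma subst_lagr (s μ : ℝ) (f g : PL) :
    lagr (subst s μ f) (subst s μ g) = C μ * subst s μ (lagr f g) := by
  have h0 : ∀ f, pderiv 0 (subst s μ f) = subst s μ (pderiv 0 f) := by
    intro f
    unfold subst
    rw [chain_rule]
    simp [Fin.sum_univ_three, Derivation.leibniz, pderiv_X, Pi.single_apply]
  have h1 : ∀ f, pderiv 1 (subst s μ f) = C μ * subst s μ (pderiv 1 f) := by
    intro f
    unfold subst
    rw [chain_rule]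
    simp [Fin.sum_univ_three, Derivation.leibniz, pderiv_X, Pi.single_apply]
    ring
  have h2 : ∀ f, pderiv 2 (subst s μ f) = C s * subst s μ (pderiv 0 f) +
      C (μ * s) * X 2 * subst s μ (pderiv 1 f) + C μ * subst s μ (pderiv 2 f) := by
    intro f
    unfold subst
    rw [chain_rule]
    have h3 : (C s : PL) = 2 * C (s / 2) := by
      rw [← C_two, ← C_mul]; congr 1; ring
    simp [Fin.sum_univ_three, Derivation.leibniz, pderiv_X, Pi.single_apply]
    rw [h3]
    ring
  unfold lagr
  rw [h0, h0, h1, h1, h2, h2]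
  simp only [map_add, map_sub, map_mul, subst_z]
  ring

lemma subst_subst (s μ : ℝ) (hμ : μ ≠ 0) (f : PL) :
    subst (-s / μ) μ⁻¹ (subst s μ f) = f := by
  have : (subst (-s / μ) μ⁻¹).comp (subst s μ) = AlgHom.id ℝ PL := by
    apply MvPolynomial.algHom_ext
    intro i
    have hc : (C μ : PL) * C μ⁻¹ = 1 := by rw [← C_mul, mul_inv_cancel₀ hμ, C_1]
    fin_cases i
    · simp only [Fin.zero_eta, AlgHom.comp_apply, subst_x, map_add, map_mul, subst_C, subst_z,
        AlgHom.id_apply]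
      simp only [div_eq_mul_inv, C_mul, C_neg]
      ring
    · simp only [Fin.mk_one, AlgHom.comp_apply, subst_y, map_add, map_mul, map_pow, subst_C,
        subst_z, AlgHom.id_apply]
      simp only [div_eq_mul_inv, C_mul, C_neg]
      linear_combination (X 1 - C (s) * C μ⁻¹ * C 2⁻¹ * X 2 ^2 +
        C s * C 2⁻¹ * C μ⁻¹ * X 2 ^ 2) * hc
    · simp only [Fin.reduceFinMk, AlgHom.comp_apply, map_mul, subst_C, subst_z,
        AlgHom.id_apply]
      linear_combination X 2 * hc
  exact congrArg (fun F => F f) this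

/-- The contact automorphism of `L` attached to `subst s μ`. -/
def Phi (s μ : ℝ) (hμ : μ ≠ 0) : PL ≃ₗ[ℝ] PL where
  toFun f := C μ⁻¹ * subst s μ f
  invFun f := C μ * subst (-s / μ) μ⁻¹ f
  map_add' f g := by simp [mul_add]
  map_smul' c f := by simp [smul_eq_C_mul, subst_C]; ring
  left_inv f := by
    simp only [map_mul, subst_C, subst_subst s μ hμ]
    rw [← mul_assoc, ← C_mul, mul_inv_cancel₀ hμ, C_1, one_mul]
  right_inv f := by
    have := subst_subst (-s / μ) μ⁻¹ (inv_ne_zero hμ) f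
    rw [inv_inv, show -(-s / μ) / μ⁻¹ = s by field_simp] at this
    simp only [map_mul, subst_C, this]
    rw [← mul_assoc, ← C_mul, inv_mul_cancel₀ hμ, C_1, one_mul]

lemma Phi_apply (s μ : ℝ) (hμ : μ ≠ 0) (f : PL) : Phi s μ hμ f = C μ⁻¹ * subst s μ f := rfl

lemma Phi_lagr (s μ : ℝ) (hμ : μ ≠ 0) (f g : PL) :
    Phi s μ hμ (lagr f g) = lagr (Phi s μ hμ f) (Phi s μ hμ g) := by
  simp only [Phi_apply]
  rw [lagr_C_left, lagr_C_right, subst_lagr]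
  have hc : (C μ : PL) * C μ⁻¹ = 1 := by rw [← C_mul, mul_inv_cancel₀ hμ, C_1]
  linear_combination (- C μ⁻¹ * subst s μ (lagr f g)) * hc

lemma Phi_U (s μ : ℝ) (hμ : μ ≠ 0) : Phi s μ hμ UU = UU := by
  have hc : (C μ : PL) * C μ⁻¹ = 1 := by rw [← C_mul, mul_inv_cancel₀ hμ, C_1]
  have h3 : (C s : PL) = 2 * C (s / 2) := by
    rw [← C_two, ← C_mul]; congr 1; ring
  simp only [Phi_apply, UU, map_sub, map_mul, subst_x, subst_y, subst_z, ← C_two, subst_C]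
  rw [C_two, h3]
  linear_combination UU * hc

/-- Graded Lie automorphisms of `L`. -/
structure IsAut (F : PL ≃ₗ[ℝ] PL) : Prop where
  lagr : ∀ f g, F (lagr f g) = _root_.lagr (F f) (F g)
  U : F UU = UU

lemma Phi_aut (s μ : ℝ) (hμ : μ ≠ 0) : IsAut (Phi s μ hμ) := ⟨Phi_lagr s μ hμ, Phi_U s μ hμ⟩

lemma refl_aut : IsAut (LinearEquiv.refl ℝ PL) := ⟨fun _ _ => rfl, rfl⟩

lemma IsAut.grade {F : PL ≃ₗ[ℝ] PL} (hF : IsAut F) (p : ℤ) (f : PL) :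
    F f ∈ Lgrade p ↔ f ∈ Lgrade p := by
  rw [mem_Lgrade, mem_Lgrade]
  have h1 := hF.lagr UU f
  rw [hF.U] at h1
  rw [← h1, ← smul_eq_C_mul, ← smul_eq_C_mul, ← map_smul]
  exact F.injective.eq_iff

lemma IsAut.map_Lgrade {F : PL ≃ₗ[ℝ] PL} (hF : IsAut F) (p : ℤ) :
    (Lgrade p).map (F : PL →ₗ[ℝ] PL) = Lgrade p := by
  ext f
  constructor
  · rintro ⟨g, hg, rfl⟩
    exact (hF.grade p g).2 hg
  · intro hf
    refine ⟨F.symm f, (hF.grade p _).1 ?_, ?_⟩ <;> simp [hf]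

lemma IsAut.map_inf {F : PL ≃ₗ[ℝ] PL} (hF : IsAut F) (h : Submodule ℝ PL) (p : ℤ) :
    (h ⊓ Lgrade p).map (F : PL →ₗ[ℝ] PL) = h.map (F : PL →ₗ[ℝ] PL) ⊓ Lgrade p := by
  rw [Submodule.map_inf _ F.injective, hF.map_Lgrade]

lemma Good.map_Phi {h : Submodule ℝ PL} (H : Good h) (s μ : ℝ) (hμ : μ ≠ 0) :
    Good (h.map (Phi s μ hμ : PL →ₗ[ℝ] PL)) where
  closed := by
    rintro _ ⟨u, hu, rfl⟩ _ ⟨v, hv, rfl⟩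
    exact ⟨lagr u v, H.closed u hu v hv, Phi_lagr s μ hμ u v⟩
  graded := by
    conv_lhs => rw [H.graded]
    rw [Submodule.map_iSup]
    simp only [(Phi_aut s μ hμ).map_inf]
  m2 := by
    rw [← (Phi_aut s μ hμ).map_inf, H.m2, Submodule.map_span]
    simp only [Set.image_singleton, LinearEquiv.coe_coe, Phi_apply, map_one, mul_one]
    have h1 : (C μ⁻¹ : PL) = μ⁻¹ • 1 := by rw [smul_eq_C_mul, mul_one]
    rw [h1]
    exact Submodule.span_singleton_smul_eq (isUnit_iff_ne_zero.2 (inv_ne_zero hμ)) _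
  m1 := by
    rw [← (Phi_aut s μ hμ).map_inf, H.m1, Submodule.map_span]
    have hc : (C μ : PL) * C μ⁻¹ = 1 := by rw [← C_mul, mul_inv_cancel₀ hμ, C_1]
    have hz : Phi s μ hμ (X 2) = X 2 := by
      rw [Phi_apply, subst_z]; linear_combination X 2 * hc
    have hx : Phi s μ hμ (X 0) = μ⁻¹ • X 0 + (s * μ⁻¹) • X 2 := by
      rw [Phi_apply, subst_x]; simp only [smul_eq_C_mul, C_mul]; ring
    simp only [Set.image_pair, LinearEquiv.coe_coe, hx, hz]
    apply le_antisymm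
    · rw [Submodule.span_le]
      rintro _ (rfl | rfl)
      · exact Submodule.mem_span_pair.2 ⟨_, _, rfl⟩
      · exact Submodule.subset_span (by simp)
    · rw [Submodule.span_le]
      rintro _ (rfl | rfl)
      · refine Submodule.mem_span_pair.2 ⟨μ, -s, ?_⟩
        simp only [smul_eq_C_mul, C_mul, C_neg]
        linear_combination (X 0 + C s * X 2) * hc
      · exact Submodule.subset_span (by simp)

lemma exists_iso {h T : Submodule ℝ PL} {F : PL ≃ₗ[ℝ] PL} (hF : IsAut F)
    (hT : h.map (F : PL →ₗ[ℝ] PL) = T) :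
    ∃ φ : ↥h ≃ₗ[ℝ] ↥T,
        (∀ u v w : ↥h, (w : PL) = lagr (u : PL) (v : PL) →
          (φ w : PL) = lagr (φ u : PL) (φ v : PL)) ∧
        (∀ p : ℤ, ∀ u : ↥h, ((u : PL) ∈ Lgrade p ↔ (φ u : PL) ∈ Lgrade p)) := by
  subst hT
  refine ⟨F.submoduleMap h, ?_, ?_⟩
  · intro u v w hw
    simp only [LinearEquiv.submoduleMap_apply, hw, hF.lagr]
  · intro p u
    simp only [LinearEquiv.submoduleMap_apply]
    exact (hF.grade p _).symm


lemma rng_cons {n : ℕ} (x : PL) (u : Fin n → PL) :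
    Set.range (Matrix.vecCons x u) = insert x (Set.range u) := by
  rw [Matrix.range_cons, Set.singleton_union]

lemma rank0 : Module.finrank ℝ (Tgt (Sum.inl 0)) = 10 := by
  have hli : LinearIndependent ℝ (![1, X 0, X 1, X 2, X 0 ^ 2, X 0 * X 2, X 2 ^ 2,
            X 0 * (2 * X 1 - X 0 * X 2), X 2 * (2 * X 1 - X 0 * X 2),
            (2 * X 1 - X 0 * X 2) ^ 2] : Fin 10 → PL) := by
    rw [Fintype.linearIndependent_iff]
    intro g hg
    have e : ∀ a b c : ℝ, _ := fun a b c => congrArg (eval ![a, b, c]) hg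
    simp [Fin.sum_univ_succ, smul_eq_C_mul] at e
    have e1 := e 0 0 0
    have e2 := e 1 0 0
    have e3 := e (-1) 0 0
    have e4 := e 0 0 1
    have e5 := e 0 0 (-1)
    have e6 := e 0 1 0
    have e7 := e 0 (-1) 0
    have e8 := e 1 1 0
    have e9 := e 0 1 1
    have e10 := e 1 0 1
    have e11 := e (-1) 0 1
    norm_num at e1 e2 e3 e4 e5 e6 e7 e8 e9 e10 e11
    intro i
    fin_cases i <;> simp <;> linarith
  have := finrank_span_eq_card hli
  repeat rw [rng_cons] at this
  rw [Matrix.range_empty, insert_empty_eq] at this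
  exact this

lemma rank1 : Module.finrank ℝ (Tgt (Sum.inl 1)) = 7 := by
  have hli : LinearIndependent ℝ (![1, X 0, X 1, X 2, X 0 ^ 2, X 0 * X 2, X 2 ^ 2] :
      Fin 7 → PL) := by
    rw [Fintype.linearIndependent_iff]
    intro g hg
    have e : ∀ a b c : ℝ, _ := fun a b c => congrArg (eval ![a, b, c]) hg
    simp [Fin.sum_univ_succ, smul_eq_C_mul] at e
    have e1 := e 0 0 0
    have e2 := e 1 0 0
    have e3 := e (-1) 0 0
    have e4 := e 0 0 1
    have e5 := e 0 0 (-1)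
    have e6 := e 0 1 0
    have e10 := e 1 0 1
    norm_num at e1 e2 e3 e4 e5 e6 e10
    intro i
    fin_cases i <;> simp <;> linarith
  have := finrank_span_eq_card hli
  repeat rw [rng_cons] at this
  rw [Matrix.range_empty, insert_empty_eq] at this
  exact this

lemma rank2 : Module.finrank ℝ (Tgt (Sum.inl 2)) = 6 := by
  have hli : LinearIndependent ℝ (![1, X 0, X 2, X 0 ^ 2, X 0 * X 2, X 2 ^ 2] :
      Fin 6 → PL) := by
    rw [Fintype.linearIndependent_iff]
    intro g hg
    have e : ∀ a b c : ℝ, _ := fun a b c => congrArg (eval ![a, b, c]) hg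
    simp [Fin.sum_univ_succ, smul_eq_C_mul] at e
    have e1 := e 0 0
    have e2 := e 1 0
    have e3 := e (-1) 0
    have e4 := e 0 1
    have e5 := e 0 (-1)
    have e10 := e 1 1
    norm_num at e1 e2 e3 e4 e5 e10
    intro i
    fin_cases i <;> simp <;> linarith
  have := finrank_span_eq_card hli
  repeat rw [rng_cons] at this
  rw [Matrix.range_empty, insert_empty_eq] at this
  exact this

lemma rank3 : Module.finrank ℝ (Tgt (Sum.inl 3)) = 8 := by
  have hli : LinearIndependent ℝ (![1, X 0, X 2, X 0 ^ 2 + X 2 ^ 2, 2 * X 1 - X 0 * X 2,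
            X 0 * (X 0 ^ 2 + X 2 ^ 2) - 2 * X 2 * (2 * X 1 - X 0 * X 2),
            X 2 * (X 0 ^ 2 + X 2 ^ 2) + 2 * X 0 * (2 * X 1 - X 0 * X 2),
            (X 0 ^ 2 + X 2 ^ 2) ^ 2 + 4 * (2 * X 1 - X 0 * X 2) ^ 2] : Fin 8 → PL) := by
    rw [Fintype.linearIndependent_iff]
    intro g hg
    have e : ∀ a b c : ℝ, _ := fun a b c => congrArg (eval ![a, b, c]) hg
    simp [Fin.sum_univ_succ, smul_eq_C_mul] at e
    have e1 := e 0 0 0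
    have e2 := e 1 0 0
    have e3 := e (-1) 0 0
    have e4 := e 0 0 1
    have e5 := e 0 0 (-1)
    have e6 := e 0 1 0
    have e7 := e 0 (-1) 0
    have e8 := e 2 0 0
    have e9 := e 0 0 2
    have e10 := e 1 0 1
    norm_num at e1 e2 e3 e4 e5 e6 e7 e8 e9 e10
    intro i
    fin_cases i <;> simp <;> linarith
  have := finrank_span_eq_card hli
  repeat rw [rng_cons] at this
  rw [Matrix.range_empty, insert_empty_eq] at this
  exact this

lemma rank4 : Module.finrank ℝ (Tgt (Sum.inl 4)) = 5 := by
  have hli : LinearIndependent ℝ (![1, X 0, X 2, X 0 ^ 2 + X 2 ^ 2, 2 * X 1 - X 0 * X 2] :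
      Fin 5 → PL) := by
    rw [Fintype.linearIndependent_iff]
    intro g hg
    have e : ∀ a b c : ℝ, _ := fun a b c => congrArg (eval ![a, b, c]) hg
    simp [Fin.sum_univ_succ, smul_eq_C_mul] at e
    have e1 := e 0 0 0
    have e2 := e 1 0 0
    have e3 := e (-1) 0 0
    have e4 := e 0 0 1
    have e6 := e 0 1 0
    norm_num at e1 e2 e3 e4 e6
    intro i
    fin_cases i <;> simp <;> linarith
  have := finrank_span_eq_card hli
  repeat rw [rng_cons] at this
  rw [Matrix.range_empty, insert_empty_eq] at this
  exact this

lemma rank5 (α : ℝ) : Module.finrank ℝ (Tgt (Sum.inr α)) = 4 := by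
  have hli : LinearIndependent ℝ
      (![1, X 0, X 2, X 0 ^ 2 + X 2 ^ 2 + C α * (2 * X 1 - X 0 * X 2)] : Fin 4 → PL) := by
    rw [Fintype.linearIndependent_iff]
    intro g hg
    have e : ∀ a b c : ℝ, _ := fun a b c => congrArg (eval ![a, b, c]) hg
    simp [Fin.sum_univ_succ, smul_eq_C_mul] at e
    have e1 := e 0 0 0
    have e2 := e 1 0 0
    have e3 := e (-1) 0 0
    have e4 := e 0 0 1
    norm_num at e1 e2 e3 e4
    intro i
    fin_cases i <;> simp <;> linarith
  have := finrank_span_eq_card hli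
  repeat rw [rng_cons] at this
  rw [Matrix.range_empty, insert_empty_eq] at this
  exact this

/-- The degree zero generator of the algebra `6°`. -/
abbrev EE (α : ℝ) : PL := X 0 ^ 2 + X 2 ^ 2 + C α * UU

lemma mem_T6 {α : ℝ} {f : PL} : f ∈ Tgt (Sum.inr α) ↔
    ∃ a b c d : ℝ, f = C a + C b * X 0 + C c * X 2 + C d * EE α := by
  simp only [Tgt, Submodule.mem_span_insert, Submodule.mem_span_singleton, smul_eq_C_mul]
  constructor
  · rintro ⟨a, _, ⟨b, _, ⟨c, _, ⟨d, rfl⟩, rfl⟩, rfl⟩, rfl⟩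
    exact ⟨a, b, c, d, by rw [mul_one]; ring⟩
  · rintro ⟨a, b, c, d, rfl⟩
    exact ⟨a, _, ⟨b, _, ⟨c, _, ⟨d, rfl⟩, rfl⟩, rfl⟩, by rw [mul_one]; ring⟩

lemma lagr_U_T6 (α a b c d : ℝ) : lagr UU (C a + C b * X 0 + C c * X 2 + C d * EE α) =
    C (-2 * a) + C (-b) * X 0 + C (-c) * X 2 := by
  rw [lagr_U]
  simp [Derivation.leibniz, pderiv_X, Pi.single_apply, pd_two, C_two]
  ring

lemma T6_zero {α : ℝ} {f : PL} (hf : f ∈ Tgt (Sum.inr α)) (h0 : f ∈ Lgrade 0) :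
    ∃ d : ℝ, f = C d * EE α := by
  obtain ⟨a, b, c, d, rfl⟩ := mem_T6.1 hf
  rw [mem_Lgrade, lagr_U_T6] at h0
  have e : ∀ a b c : ℝ, _ := fun a b c => congrArg (eval ![a, b, c]) h0
  simp at e
  have e1 := e 0 0
  have e2 := e 1 0
  have e3 := e 0 1
  norm_num at e1 e2 e3
  have ha : a = 0 := by linarith
  have hb : b = 0 := by linarith
  have hc : c = 0 := by linarith
  subst ha hb hc
  exact ⟨d, by simp⟩

lemma T6_m1 {α : ℝ} {f : PL} (hf : f ∈ Tgt (Sum.inr α)) (h0 : f ∈ Lgrade (-1)) :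
    ∃ b c : ℝ, f = C b * X 0 + C c * X 2 := by
  obtain ⟨a, b, c, d, rfl⟩ := mem_T6.1 hf
  rw [mem_Lgrade, lagr_U_T6] at h0
  have e : ∀ a b c : ℝ, _ := fun a b c => congrArg (eval ![a, b, c]) h0
  simp at e
  have e1 := e 0 0 0
  have e2 := e 1 0 0
  have e3 := e (-1) 0 0
  norm_num at e1 e2 e3
  have ha : a = 0 := by linarith
  have hd : d = 0 := by linarith
  subst ha hd
  exact ⟨b, c, by simp⟩

lemma E_bracket (α b c : ℝ) : lagr (EE α) (C b * X 0 + C c * X 2) =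
    C (2 * c - α * b) * X 0 + C (-2 * b - α * c) * X 2 := by
  unfold lagr EE
  simp [Derivation.leibniz, pderiv_X, Pi.single_apply, pd_two, C_two]
  ring

lemma lin_eq {a b c d : ℝ}
    (hh : (C a * X 0 + C b * X 2 : PL) = C c * X 0 + C d * X 2) : a = c ∧ b = d := by
  have e1 := congrArg (eval ![1, 0, 0]) hh
  have e2 := congrArg (eval ![0, 0, 1]) hh
  simp at e1 e2
  exact ⟨e1, e2⟩

lemma E_grade (α : ℝ) : EE α ∈ Lgrade 0 := by
  rw [mem_Lgrade]
  have := lagr_U_T6 α 0 0 0 1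
  simpa using this

lemma alpha_unique {α β : ℝ} (hα : 0 ≤ α) (hβ : 0 ≤ β)
    (χ : ↥(Tgt (Sum.inr α)) ≃ₗ[ℝ] ↥(Tgt (Sum.inr β)))
    (h1 : ∀ u v w : ↥(Tgt (Sum.inr α)), (w : PL) = lagr (u : PL) (v : PL) →
          (χ w : PL) = lagr (χ u : PL) (χ v : PL))
    (h2 : ∀ p : ℤ, ∀ u : ↥(Tgt (Sum.inr α)), (u : PL) ∈ Lgrade p → (χ u : PL) ∈ Lgrade p) :
    α = β := by
  let e : ↥(Tgt (Sum.inr α)) := ⟨EE α, mem_T6.2 ⟨0, 0, 0, 1, by simp⟩⟩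
  let x : ↥(Tgt (Sum.inr α)) := ⟨X 0, mem_T6.2 ⟨0, 1, 0, 0, by simp⟩⟩
  let z : ↥(Tgt (Sum.inr α)) := ⟨X 2, mem_T6.2 ⟨0, 0, 1, 0, by simp⟩⟩
  obtain ⟨k, hk⟩ := T6_zero (χ e).2 (h2 0 e (E_grade α))
  obtain ⟨a, b, hx⟩ := T6_m1 (χ x).2 (h2 (-1) x x_grade)
  obtain ⟨c, d, hz⟩ := T6_m1 (χ z).2 (h2 (-1) z z_grade)
  have hex := h1 e x ((-α) • x + (-2 : ℝ) • z) (by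
    have := E_bracket α 1 0
    simp only [C_1, C_0, one_mul, zero_mul, add_zero] at this
    simp only [e, x, z, this, Submodule.coe_add, Submodule.coe_smul, smul_eq_C_mul]
    norm_num)
  have hez := h1 e z ((2 : ℝ) • x + (-α) • z) (by
    have := E_bracket α 0 1
    simp only [C_1, C_0, one_mul, zero_mul, zero_add] at this
    simp only [e, x, z, this, Submodule.coe_add, Submodule.coe_smul, smul_eq_C_mul]
    norm_num)
  simp only [map_add, map_smul, Submodule.coe_add, Submodule.coe_smul, smul_eq_C_mul, hk, hx, hz,
    lagr_C_left, E_bracket] at hex hez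
  have hex' := lin_eq (a := -α * a + -2 * c) (b := -α * b + -2 * d)
    (c := k * (2 * b - β * a)) (d := k * (-2 * a - β * b)) (by
      simp only [C_add, C_mul] at hex ⊢; linear_combination hex)
  have hez' := lin_eq (a := 2 * a + -α * c) (b := 2 * b + -α * d)
    (c := k * (2 * d - β * c)) (d := k * (-2 * c - β * d)) (by
      simp only [C_add, C_mul] at hez ⊢; linear_combination hez)
  have hne : a ^ 2 + b ^ 2 ≠ 0 := by
    intro h0
    have ha : a = 0 := by nlinarith [sq_nonneg a, sq_nonneg b]
    have hb : b = 0 := by nlinarith [sq_nonneg a, sq_nonneg b]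
    rw [ha, hb] at hx
    have : χ x = 0 := by
      apply Subtype.ext; rw [hx]; simp
    have hx0 : x = 0 := by simpa using this
    have : (X 0 : PL) = 0 := congrArg Subtype.val hx0
    exact X_ne_zero _ this
  obtain ⟨p1, p2⟩ := hex'
  obtain ⟨p3, p4⟩ := hez'
  have q1 : 2 * c = (k * β - α) * a - 2 * k * b := by linarith
  have q2 : 2 * d = (k * β - α) * b + 2 * k * a := by linarith
  have q3 : (4 + (k * β - α) ^ 2 - 4 * k ^ 2) * a = 4 * k * (k * β - α) * b := by
    linear_combination 2 * p3 - (k * β - α) * q1 + 2 * k * q2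
  have q4 : (4 + (k * β - α) ^ 2 - 4 * k ^ 2) * b = - (4 * k * (k * β - α)) * a := by
    linear_combination 2 * p4 - (k * β - α) * q2 - 2 * k * q1
  have m1 : (4 + (k * β - α) ^ 2 - 4 * k ^ 2) = 0 := by
    apply (mul_eq_zero.1 (_ : _ * (a ^ 2 + b ^ 2) = 0)).resolve_right hne
    linear_combination a * q3 + b * q4
  have m2 : k * (k * β - α) = 0 := by
    apply (mul_eq_zero.1 (_ : _ * (a ^ 2 + b ^ 2) = 0)).resolve_right hne
    linear_combination (-b / 4) * q3 + (a / 4) * q4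
  rcases mul_eq_zero.1 m2 with hk0 | hg0
  · rw [hk0] at m1
    nlinarith [sq_nonneg α]
  · rw [hg0] at m1
    have hk2 : (k - 1) * (k + 1) = 0 := by linarith
    rcases mul_eq_zero.1 hk2 with hk1 | hk1
    · have : k = 1 := by linarith
      rw [this] at hg0; linarith
    · have : k = -1 := by linarith
      rw [this] at hg0; linarith

lemma iso_unique {h : Submodule ℝ PL} (hclosed : ∀ u ∈ h, ∀ v ∈ h, lagr u v ∈ h)
    {i j : Fin 5 ⊕ ℝ} (hi : ∀ α : ℝ, i = Sum.inr α → 0 ≤ α) (hj : ∀ α : ℝ, j = Sum.inr α → 0 ≤ α)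
    (φ : ↥h ≃ₗ[ℝ] ↥(Tgt i))
    (hφ1 : ∀ u v w : ↥h, (w : PL) = lagr (u : PL) (v : PL) →
          (φ w : PL) = lagr (φ u : PL) (φ v : PL))
    (hφ2 : ∀ p : ℤ, ∀ u : ↥h, ((u : PL) ∈ Lgrade p ↔ (φ u : PL) ∈ Lgrade p))
    (ψ : ↥h ≃ₗ[ℝ] ↥(Tgt j))
    (hψ1 : ∀ u v w : ↥h, (w : PL) = lagr (u : PL) (v : PL) →
          (ψ w : PL) = lagr (ψ u : PL) (ψ v : PL))
    (hψ2 : ∀ p : ℤ, ∀ u : ↥h, ((u : PL) ∈ Lgrade p ↔ (ψ u : PL) ∈ Lgrade p)) : i = j := by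
  have hr : Module.finrank ℝ (Tgt i) = Module.finrank ℝ (Tgt j) :=
    (φ.symm.trans ψ).finrank_eq
  rcases i with i | α <;> rcases j with j | β
  · have r0 := rank0
    have r1 := rank1
    have r2 := rank2
    have r3 := rank3
    have r4 := rank4
    fin_cases i <;> fin_cases j <;> first | rfl | (simp at hr; omega)
  · have r0 := rank0
    have r1 := rank1
    have r2 := rank2
    have r3 := rank3
    have r4 := rank4
    rw [rank5] at hr
    fin_cases i <;> (simp at hr; omega)
  · have r0 := rank0
    have r1 := rank1
    have r2 := rank2
    have r3 := rank3
    have r4 := rank4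
    rw [rank5] at hr
    fin_cases j <;> (simp at hr; omega)
  · congr 1
    refine alpha_unique (hi α rfl) (hj β rfl) (φ.symm.trans ψ) ?_ ?_
    · intro u v w hw
      apply hψ1
      let w' : ↥h := ⟨lagr (φ.symm u : PL) (φ.symm v : PL),
        hclosed _ (φ.symm u).2 _ (φ.symm v).2⟩
      have h1 := hφ1 (φ.symm u) (φ.symm v) w' rfl
      simp only [LinearEquiv.apply_symm_apply] at h1
      have h2 : φ w' = w := Subtype.ext (by rw [h1, hw])
      rw [← h2]
      exact congrArg Subtype.val (φ.symm_apply_apply w')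
    · intro p u hu
      apply (hψ2 p _).1
      apply (hφ2 p _).2
      simpa using hu


lemma C_three : (C 3 : PL) = 3 := map_ofNat C 3

lemma C_four : (C 4 : PL) = 4 := map_ofNat C 4

lemma C_six : (C 6 : PL) = 6 := map_ofNat C 6

lemma C_eight : (C 8 : PL) = 8 := map_ofNat C 8

lemma C_tf : (C 24 : PL) = 24 := map_ofNat C 24

lemma C_twelve : (C 12 : PL) = 12 := map_ofNat C 12

lemma C_sixteen : (C 16 : PL) = 16 := map_ofNat C 16

lemma pd_three (i : Fin 3) : pderiv i (3 : PL) = 0 := by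
  rw [← C_three, pderiv_C]

lemma pd_four (i : Fin 3) : pderiv i (4 : PL) = 0 := by
  rw [← C_four, pderiv_C]

lemma Good.le {h T : Submodule ℝ PL} (H : Good h) (t1 : (1 : PL) ∈ T) (tx : X 0 ∈ T)
    (tz : X 2 ∈ T) (h0 : ∀ f ∈ h ⊓ Lgrade 0, f ∈ T) (h1 : ∀ f ∈ h ⊓ Lgrade 1, f ∈ T)
    (h2 : ∀ f ∈ h ⊓ Lgrade 2, f ∈ T) (h3 : ∀ f ∈ h ⊓ Lgrade 3, f = 0) : h ≤ T := by
  rw [H.graded]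
  apply iSup_le
  intro p f hf
  rcases lt_or_ge p (-2) with hp | hp
  · rw [Lgrade_neg hp hf.2]; exact T.zero_mem
  rcases lt_or_ge p 3 with hp3 | hp3
  · interval_cases p
    · obtain ⟨a, rfl⟩ := H.form_m2 hf
      rw [show (C a : PL) = a • 1 by rw [smul_eq_C_mul, mul_one]]
      exact T.smul_mem _ t1
    · obtain ⟨a, b, rfl⟩ := H.form_m1 hf
      rw [← smul_eq_C_mul, ← smul_eq_C_mul]
      exact T.add_mem (T.smul_mem _ tx) (T.smul_mem _ tz)
    · exact h0 f hf
    · exact h1 f hf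
    · exact h2 f hf
  · rw [H.vanish (by norm_num) h3 hp3 f hf]; exact T.zero_mem

lemma no_x2z {h : Submodule ℝ PL} (H : Good h) (hfd : FiniteDimensional ℝ ↥h)
    (h2 : (X 0 ^ 2 : PL) ∈ h) (h3 : (X 0 ^ 2 * X 2 : PL) ∈ h) : False := by
  have hn : ∀ n : ℕ, (X 0 ^ (n + 2) : PL) ∈ h := by
    intro n
    induction n with
    | zero => exact h2
    | succ n ih =>
      have h4 := H.closed _ h3 _ ih
      have h5 : lagr (X 0 ^ 2 * X 2) (X 0 ^ (n + 2)) =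
          C (-((n : ℝ) + 2)) * X 0 ^ (n + 1 + 2) := by
        unfold lagr
        simp [Derivation.leibniz, pderiv_X, Pi.single_apply, pd_two, C_two]
        ring
      rw [h5] at h4
      refine Good.of_cmul ?_ h4
      have : (0 : ℝ) ≤ n := Nat.cast_nonneg n
      intro h6; linarith
  have hli : LinearIndependent ℝ (fun n : ℕ => (X 0 ^ (n + 2) : PL)) := by
    have h1 := (basisMonomials (Fin 3) ℝ).linearIndependent.comp
      (fun n : ℕ => Finsupp.single (0 : Fin 3) (n + 2)) (by
        intro a b hab
        have := congrArg (fun F => F 0) hab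
        simpa using this)
    have h2 : (fun n : ℕ => (X 0 ^ (n + 2) : PL)) = (basisMonomials (Fin 3) ℝ) ∘
        (fun n : ℕ => Finsupp.single (0 : Fin 3) (n + 2)) := by
      funext n
      simp [X_pow_eq_monomial]
    rw [h2]
    exact h1
  have hli2 : LinearIndependent ℝ (fun n : ℕ => (⟨X 0 ^ (n + 2), hn n⟩ : h)) :=
    LinearIndependent.of_comp h.subtype hli
  have := hli2.finite
  exact not_finite ℕ

lemma Good.form_1 {h : Submodule ℝ PL} (H : Good h) {f : PL} (hf : f ∈ h ⊓ Lgrade 1) :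
    ∃ c0 c1 c2 c3 a b : ℝ, f = C c0 * X 0 ^ 3 + C c1 * (X 0 ^ 2 * X 2) + C c2 * (X 0 * X 2 ^ 2) +
      C c3 * X 2 ^ 3 + (C a * X 0 + C b * X 2) * UU := by
  obtain ⟨a1, a2, a3, a4, ha⟩ := H.form_0 (H.brx hf)
  obtain ⟨b1, b2, b3, b4, hb⟩ := H.form_0 (H.brz hf)
  obtain ⟨l1, l2, hl⟩ := H.form_m1 (H.br1 hf)
  have h1 := recon hf.2
  rw [ha, hb, hl] at h1
  have h2 := of_C_mul_eq (by norm_num) h1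
  refine ⟨-b1 / 3, (a1 - b2) / 3, (a2 - b3) / 3, a3 / 3, (l1 - b4) / 3, (l2 + a4) / 3, ?_⟩
  rw [h2]
  simp only [div_eq_mul_inv, C_mul, C_neg, C_sub, C_add]
  norm_num
  ring

lemma brA1 (c0 c1 c2 c3 a b : ℝ) : lagr (X 0 ^ 2) (lagr (X 0 ^ 2) (C c0 * X 0 ^ 3 +
      C c1 * (X 0 ^ 2 * X 2) + C c2 * (X 0 * X 2 ^ 2) +
      C c3 * X 2 ^ 3 + (C a * X 0 + C b * X 2) * UU)) =
      C (8 * c2) * X 0 ^ 3 + C (24 * c3) * (X 0 ^ 2 * X 2) := by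
  unfold lagr UU
  simp [Derivation.leibniz, pderiv_X, Pi.single_apply, pd_two, pd_three, pd_four, C_two, C_three, C_four, C_six, C_eight, C_tf, C_twelve, C_sixteen]
  ring

lemma brA2 (c0 c1 c2 c3 a b : ℝ) : lagr (X 2 ^ 2) (lagr (X 2 ^ 2) (C c0 * X 0 ^ 3 +
      C c1 * (X 0 ^ 2 * X 2) + C c2 * (X 0 * X 2 ^ 2) +
      C c3 * X 2 ^ 3 + (C a * X 0 + C b * X 2) * UU)) =
      C (24 * c0) * (X 0 * X 2 ^ 2) + C (8 * c1) * X 2 ^ 3 := by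
  unfold lagr UU
  simp [Derivation.leibniz, pderiv_X, Pi.single_apply, pd_two, pd_three, pd_four, C_two, C_three, C_four, C_six, C_eight, C_tf, C_twelve, C_sixteen]
  ring

lemma brA3 (a b : ℝ) : lagr (X 0 ^ 2) (C a * X 0 ^ 3 + C b * (X 0 ^ 2 * X 2)) =
    C (2 * b) * X 0 ^ 3 := by
  unfold lagr
  simp [Derivation.leibniz, pderiv_X, Pi.single_apply, pd_two, pd_three, pd_four, C_two, C_three, C_four, C_six, C_eight, C_tf, C_twelve, C_sixteen]
  ring

lemma brA4 (a b : ℝ) : lagr (X 2 ^ 2) (C a * (X 0 * X 2 ^ 2) + C b * X 2 ^ 3) =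
    C (-2 * a) * X 2 ^ 3 := by
  unfold lagr
  simp [Derivation.leibniz, pderiv_X, Pi.single_apply, pd_two, pd_three, pd_four, C_two, C_three, C_four, C_six, C_eight, C_tf, C_twelve, C_sixteen]
  ring

lemma brA5 : lagr (X 2 ^ 2) (X 0 ^ 3) = C (-6) * (X 0 ^ 2 * X 2) := by
  unfold lagr
  simp [Derivation.leibniz, pderiv_X, Pi.single_apply, pd_two, pd_three, pd_four, C_two, C_three, C_four, C_six, C_eight, C_tf, C_twelve, C_sixteen]
  ring

lemma brA6 : lagr (X 0 ^ 2) (lagr (X 0 ^ 2) (X 2 ^ 3)) = C 24 * (X 0 ^ 2 * X 2) := by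
  unfold lagr
  simp [Derivation.leibniz, pderiv_X, Pi.single_apply, pd_two, pd_three, pd_four, C_two, C_three, C_four, C_six, C_eight, C_tf, C_twelve, C_sixteen]
  ring

lemma brA7 (a b : ℝ) : lagr (X 0 ^ 2) ((C a * X 0 + C b * X 2) * UU) =
    C (2 * b) * (X 0 * UU) := by
  unfold lagr UU
  simp [Derivation.leibniz, pderiv_X, Pi.single_apply, pd_two, pd_three, pd_four, C_two, C_three, C_four, C_six, C_eight, C_tf, C_twelve, C_sixteen]
  ring

lemma brA8 (a b : ℝ) : lagr (X 2 ^ 2) ((C a * X 0 + C b * X 2) * UU) =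
    C (-2 * a) * (X 2 * UU) := by
  unfold lagr UU
  simp [Derivation.leibniz, pderiv_X, Pi.single_apply, pd_two, pd_three, pd_four, C_two, C_three, C_four, C_six, C_eight, C_tf, C_twelve, C_sixteen]
  ring

lemma brA9 : lagr (X 0 * UU) (X 2 * UU) = UU ^ 2 := by
  unfold lagr UU
  simp [Derivation.leibniz, pderiv_X, Pi.single_apply, pd_two, pd_three, pd_four, C_two, C_three, C_four, C_six, C_eight, C_tf, C_twelve, C_sixteen]
  ring

lemma brA10 : lagr (X 2) (X 0 * UU) = X 0 * X 2 - UU := by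
  unfold lagr UU
  simp [Derivation.leibniz, pderiv_X, Pi.single_apply, pd_two, pd_three, pd_four, C_two, C_three, C_four, C_six, C_eight, C_tf, C_twelve, C_sixteen]
  ring

lemma A_h1 {h : Submodule ℝ PL} (H : Good h) (hfd : FiniteDimensional ℝ ↥h)
    (hxx : (X 0 ^ 2 : PL) ∈ h) (hzz : (X 2 ^ 2 : PL) ∈ h)
    {f : PL} (hf : f ∈ h ⊓ Lgrade 1) : ∃ a b : ℝ, f = (C a * X 0 + C b * X 2) * UU := by
  have nx3 : (X 0 ^ 3 : PL) ∉ h := by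
    intro h3
    have h4 := H.closed _ hzz _ h3
    rw [brA5] at h4
    exact no_x2z H hfd hxx (Good.of_cmul (by norm_num) h4)
  have nz3 : (X 2 ^ 3 : PL) ∉ h := by
    intro h3
    have h4 := H.closed _ hxx _ (H.closed _ hxx _ h3)
    rw [brA6] at h4
    exact no_x2z H hfd hxx (Good.of_cmul (by norm_num) h4)
  obtain ⟨c0, c1, c2, c3, a, b, rfl⟩ := H.form_1 hf
  have e1 := H.closed _ hxx _ (H.closed _ hxx _ hf.1)
  rw [brA1] at e1
  have e2 := H.closed _ hxx _ e1
  rw [brA3] at e2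
  have hc3 : c3 = 0 := by
    by_contra hc
    exact nx3 (Good.of_cmul (by simpa using hc) e2)
  have hc2 : c2 = 0 := by
    by_contra hc
    rw [hc3] at e1
    simp only [mul_zero, C_0, zero_mul, add_zero] at e1
    exact nx3 (Good.of_cmul (by simpa using hc) e1)
  have e3 := H.closed _ hzz _ (H.closed _ hzz _ hf.1)
  rw [brA2] at e3
  have e4 := H.closed _ hzz _ e3
  rw [brA4] at e4
  have hc0 : c0 = 0 := by
    by_contra hc
    exact nz3 (Good.of_cmul (by simpa using hc) e4)
  have hc1 : c1 = 0 := by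
    by_contra hc
    rw [hc0] at e3
    simp only [mul_zero, C_0, zero_mul, zero_add] at e3
    exact nz3 (Good.of_cmul (by simpa using hc) e3)
  subst hc0 hc1 hc2 hc3
  exact ⟨a, b, by simp⟩

lemma A_h2 {h : Submodule ℝ PL} (H : Good h)
    (hh1 : ∀ f ∈ h ⊓ Lgrade 1, ∃ a b : ℝ, f = (C a * X 0 + C b * X 2) * UU)
    {f : PL} (hf : f ∈ h ⊓ Lgrade 2) : ∃ a : ℝ, f = C a * UU ^ 2 := by
  obtain ⟨a1, a2, ha⟩ := hh1 _ (H.brx hf)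
  obtain ⟨b1, b2, hb⟩ := hh1 _ (H.brz hf)
  obtain ⟨k1, k2, k3, k4, hk⟩ := H.form_0 (H.br1 hf)
  have h1 := recon hf.2
  rw [ha, hb, hk] at h1
  have h2 := of_C_mul_eq (by norm_num) h1
  have h3 : f = C ((k1 - b1) / 4) * (X 0 ^ 2 * UU) + C ((k2 + a1 - b2) / 4) * (X 0 * X 2 * UU) +
      C ((k3 + a2) / 4) * (X 2 ^ 2 * UU) + C (k4 / 4) * UU ^ 2 := by
    rw [h2]
    simp only [div_eq_mul_inv, C_mul, C_neg, C_sub, C_add]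
    norm_num
    ring
  generalize (k1 - b1) / 4 = p1 at h3
  generalize (k2 + a1 - b2) / 4 = p2 at h3
  generalize (k3 + a2) / 4 = p3 at h3
  generalize k4 / 4 = p4 at h3
  subst h3
  have e : ∀ a b c : ℝ, _ := fun a b c => congrArg (eval ![a, b, c]) ha
  simp [lagr_x, Derivation.leibniz, pderiv_X, Pi.single_apply, pd_two, pd_three, pd_four] at e
  have e1 := e 1 0 0
  have e2 := e 1 (1 / 2) 1
  have e3 := e (-1) (-1 / 2) 1
  norm_num at e1 e2 e3
  have q1 : p1 = 0 := by linarith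
  have q2 : p2 = 0 := by linarith
  have q3 : p3 = 0 := by linarith
  subst q1 q2 q3
  exact ⟨p4, by simp⟩

lemma A_h3 {h : Submodule ℝ PL} (H : Good h)
    (hh1 : ∀ f ∈ h ⊓ Lgrade 1, ∃ a b : ℝ, f = (C a * X 0 + C b * X 2) * UU)
    {f : PL} (hf : f ∈ h ⊓ Lgrade 3) : f = 0 := by
  obtain ⟨a, ha⟩ := A_h2 H hh1 (H.brx hf)
  obtain ⟨b, hb⟩ := A_h2 H hh1 (H.brz hf)
  obtain ⟨l1, l2, hl⟩ := hh1 _ (H.br1 hf)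
  have h1 := recon hf.2
  rw [ha, hb, hl] at h1
  have h2 := of_C_mul_eq (by norm_num) h1
  have h3 : f = C ((l1 - b) / 5) * (X 0 * UU ^ 2) + C ((l2 + a) / 5) * (X 2 * UU ^ 2) := by
    rw [h2]
    simp only [div_eq_mul_inv, C_mul, C_neg, C_sub, C_add]
    norm_num
    ring
  generalize (l1 - b) / 5 = p1 at h3
  generalize (l2 + a) / 5 = p2 at h3
  subst h3
  have e : ∀ a b c : ℝ, _ := fun a b c => congrArg (eval ![a, b, c]) ha
  simp [lagr_x, Derivation.leibniz, pderiv_X, Pi.single_apply, pd_two, pd_three, pd_four] at e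
  have e1 := e 1 1 0
  have e2 := e 1 (-1) 0
  have e3 := e 1 1 1
  have e4 := e 1 0 1
  norm_num at e1 e2 e3 e4
  have q1 : p1 = 0 := by linarith
  have q2 : p2 = 0 := by linarith
  subst q1 q2
  simp

lemma caseA {h : Submodule ℝ PL} (H : Good h) (hfd : FiniteDimensional ℝ ↥h)
    (hxx : (X 0 ^ 2 : PL) ∈ h) (hxz : (X 0 * X 2 : PL) ∈ h) (hzz : (X 2 ^ 2 : PL) ∈ h) :
    ∃ i : Fin 5, h = Tgt (Sum.inl i) := by
  have hh1 : ∀ f ∈ h ⊓ Lgrade 1, ∃ a b : ℝ, f = (C a * X 0 + C b * X 2) * UU :=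
    fun f hf => A_h1 H hfd hxx hzz hf
  by_cases hz : ∀ f ∈ h ⊓ Lgrade 1, f = 0
  · have hz2 : ∀ f ∈ h ⊓ Lgrade 2, f = 0 := H.vanish (by norm_num) hz (by norm_num)
    have hz3 : ∀ f ∈ h ⊓ Lgrade 3, f = 0 := H.vanish (by norm_num) hz (by norm_num)
    by_cases hU : UU ∈ h
    · refine ⟨1, le_antisymm ?_ ?_⟩
      · apply H.le
        · exact Submodule.subset_span (by simp)
        · exact Submodule.subset_span (by simp)
        · exact Submodule.subset_span (by simp)
        · intro f hf
          obtain ⟨a, b, c, d, rfl⟩ := H.form_0 hf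
          have : C a * X 0 ^ 2 + C b * (X 0 * X 2) + C c * X 2 ^ 2 + C d * UU =
            a • X 0 ^ 2 + (b - d) • (X 0 * X 2) + c • X 2 ^ 2 + (2 * d) • X 1 := by
            simp only [smul_eq_C_mul, C_sub, C_mul, C_two, C_three, C_four, C_six, C_eight, C_tf, C_twelve, C_sixteen]
            ring
          rw [this]
          refine add_mem (add_mem (add_mem ?_ ?_) ?_) ?_ <;>
          exact Submodule.smul_mem _ _ (Submodule.subset_span (by simp))
        · intro f hf; rw [hz f hf]; exact Submodule.zero_mem _
        · intro f hf; rw [hz2 f hf]; exact Submodule.zero_mem _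
        · exact hz3
      · have hy : (X 1 : PL) ∈ h := by
          apply Good.of_cmul (c := 2) (by norm_num)
          rw [C_two, show (2 * X 1 : PL) = UU + X 0 * X 2 by ring]
          exact add_mem hU hxz
        apply Submodule.span_le.2
        rintro f (rfl | rfl | rfl | rfl | rfl | rfl | rfl)
        exacts [H.one, H.x, hy, H.z, hxx, hxz, hzz]
    · refine ⟨2, le_antisymm ?_ ?_⟩
      · apply H.le
        · exact Submodule.subset_span (by simp)
        · exact Submodule.subset_span (by simp)
        · exact Submodule.subset_span (by simp)
        · intro f hf
          obtain ⟨a, b, c, d, rfl⟩ := H.form_0 hf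
          have hd : d = 0 := by
            by_contra hd
            apply hU
            apply Good.of_cmul hd
            have := sub_mem hf.1 (add_mem (add_mem (Good.cmul hxx a) (Good.cmul hxz b))
              (Good.cmul hzz c))
            rwa [add_sub_cancel_left] at this
          subst hd
          rw [C_0, zero_mul, add_zero]
          simp only [← smul_eq_C_mul]
          refine add_mem (add_mem ?_ ?_) ?_ <;>
          exact Submodule.smul_mem _ _ (Submodule.subset_span (by simp))
        · intro f hf; rw [hz f hf]; exact Submodule.zero_mem _
        · intro f hf; rw [hz2 f hf]; exact Submodule.zero_mem _
        · exact hz3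
      · apply Submodule.span_le.2
        rintro f (rfl | rfl | rfl | rfl | rfl | rfl)
        exacts [H.one, H.x, H.z, hxx, hxz, hzz]
  · push Not at hz
    obtain ⟨f, hf, hf0⟩ := hz
    obtain ⟨a, b, rfl⟩ := hh1 f hf
    have k1 := H.closed _ hxx _ hf.1
    have k2 := H.closed _ hzz _ hf.1
    rw [brA7] at k1
    rw [brA8] at k2
    have s1 : X 0 * UU ∈ h → X 2 * UU ∈ h := by
      intro hx
      have := brA8 1 0
      simp only [C_1, C_0, one_mul, zero_mul, add_zero] at this
      have k := H.closed _ hzz _ hx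
      rw [this] at k
      exact Good.of_cmul (by norm_num) k
    have s2 : X 2 * UU ∈ h → X 0 * UU ∈ h := by
      intro hx
      have := brA7 0 1
      simp only [C_1, C_0, one_mul, zero_mul, zero_add] at this
      have k := H.closed _ hxx _ hx
      rw [this] at k
      exact Good.of_cmul (by norm_num) k
    have hxU : X 0 * UU ∈ h := by
      by_cases hb : b = 0
      · by_cases ha : a = 0
        · subst ha hb
          simp at hf0
        · exact s2 (Good.of_cmul (by simpa using ha) k2)
      · exact Good.of_cmul (by simpa using hb) k1
    have hzU := s1 hxU
    have hUU := H.closed _ hxU _ hzU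
    rw [brA9] at hUU
    have hU : UU ∈ h := by
      have k := H.closed _ H.z _ hxU
      rw [brA10] at k
      have := sub_mem hxz k
      rwa [sub_sub_cancel] at this
    refine ⟨0, le_antisymm ?_ ?_⟩
    · apply H.le
      · exact Submodule.subset_span (by simp)
      · exact Submodule.subset_span (by simp)
      · exact Submodule.subset_span (by simp)
      · intro f hf
        obtain ⟨a, b, c, d, rfl⟩ := H.form_0 hf
        have : C a * X 0 ^ 2 + C b * (X 0 * X 2) + C c * X 2 ^ 2 + C d * UU =
          a • X 0 ^ 2 + (b - d) • (X 0 * X 2) + c • X 2 ^ 2 + (2 * d) • X 1 := by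
          simp only [smul_eq_C_mul, C_sub, C_mul, C_two, C_three, C_four, C_six, C_eight, C_tf, C_twelve, C_sixteen]
          ring
        rw [this]
        refine add_mem (add_mem (add_mem ?_ ?_) ?_) ?_ <;>
        exact Submodule.smul_mem _ _ (Submodule.subset_span (by simp))
      · intro f hf
        obtain ⟨a, b, rfl⟩ := hh1 f hf
        rw [add_mul, mul_assoc, mul_assoc, ← smul_eq_C_mul, ← smul_eq_C_mul]
        refine add_mem ?_ ?_ <;>
        exact Submodule.smul_mem _ _ (Submodule.subset_span (by simp))
      · intro f hf
        obtain ⟨a, rfl⟩ := A_h2 H hh1 hf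
        rw [← smul_eq_C_mul]
        exact Submodule.smul_mem _ _ (Submodule.subset_span (by simp))
      · intro f hf
        exact A_h3 H hh1 hf
    · have hy : (X 1 : PL) ∈ h := by
        apply Good.of_cmul (c := 2) (by norm_num)
        rw [C_two, show (2 * X 1 : PL) = UU + X 0 * X 2 by ring]
        exact add_mem hU hxz
      apply Submodule.span_le.2
      rintro f (rfl | rfl | rfl | rfl | rfl | rfl | rfl | rfl | rfl | rfl)
      exacts [H.one, H.x, hy, H.z, hxx, hxz, hzz, hxU, hzU, hUU]


abbrev QQ : PL := X 0 ^ 2 + X 2 ^ 2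
abbrev P3 : PL := X 0 * QQ - 2 * X 2 * UU
abbrev Q3 : PL := X 2 * QQ + 2 * X 0 * UU
abbrev R4 : PL := QQ ^ 2 + 4 * UU ^ 2

lemma brC1 : lagr QQ P3 = C (-2) * Q3 := by
  unfold lagr P3 Q3 UU QQ
  simp [Derivation.leibniz, pderiv_X, Pi.single_apply, pd_two, C_two]
  ring

lemma brC2 : lagr QQ Q3 = C 2 * P3 := by
  unfold lagr P3 Q3 UU QQ
  simp [Derivation.leibniz, pderiv_X, Pi.single_apply, pd_two, C_two]
  ring

lemma brC3 : lagr P3 Q3 = R4 := by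
  unfold lagr P3 Q3 UU QQ R4
  simp [Derivation.leibniz, pderiv_X, Pi.single_apply, pd_two, C_two]
  ring

lemma C_coef {h : Submodule ℝ PL} (H : Good h) {f : PL} (hf : f ∈ h ⊓ Lgrade 1)
    {s1 s2 t1 t2 : ℝ} (hx : lagr (X 0) f = C s1 * QQ + C s2 * UU)
    (hz : lagr (X 2) f = C t1 * QQ + C t2 * UU) :
    ∃ r s : ℝ, f = C r * P3 + C s * Q3 ∧ s1 = 3 * s ∧ s2 = -2 * r ∧ t1 = -3 * r ∧ t2 = -2 * s := by
  obtain ⟨c0, c1, c2, c3, a, b, rfl⟩ := H.form_1 hf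
  have e : ∀ a b c : ℝ, _ := fun a b c => congrArg (eval ![a, b, c]) hx
  have e' : ∀ a b c : ℝ, _ := fun a b c => congrArg (eval ![a, b, c]) hz
  simp [lagr_x, Derivation.leibniz, pderiv_X, Pi.single_apply, pd_two] at e
  simp [lagr_z, Derivation.leibniz, pderiv_X, Pi.single_apply, pd_two] at e'
  have e1 := e 1 0 0
  have e2 := e 0 0 1
  have e3 := e 1 (1 / 2) 1
  have e4 := e 0 (1 / 2) 0
  have f1 := e' 1 0 0
  have f2 := e' 0 0 1
  have f3 := e' 1 (1 / 2) 1
  have f4 := e' 0 (1 / 2) 0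
  norm_num at e1 e2 e3 e4 f1 f2 f3 f4
  obtain rfl : c1 = a / 2 := by linarith
  obtain rfl : c2 = - b / 2 := by linarith
  obtain rfl : c3 = a / 2 := by linarith
  obtain rfl : c0 = - b / 2 := by linarith
  refine ⟨-b / 2, a / 2, ?_, by linarith, by linarith, by linarith, by linarith⟩
  have ha : (C a : PL) = 2 * C (a / 2) := by
    rw [← C_two, ← C_mul]; congr 1; ring
  have hb : (C b : PL) = - (2 * C (- b / 2)) := by
    rw [← C_two, ← C_mul, ← C_neg]; congr 1; ring
  rw [ha, hb]
  ring

lemma C_h2 {h : Submodule ℝ PL} (H : Good h)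
    (hh0 : ∀ f ∈ h ⊓ Lgrade 0, ∃ r t : ℝ, f = C r * QQ + C t * UU)
    (hh1 : ∀ f ∈ h ⊓ Lgrade 1, ∃ a b : ℝ, f = C a * P3 + C b * Q3)
    {f : PL} (hf : f ∈ h ⊓ Lgrade 2) : ∃ a : ℝ, f = C a * R4 := by
  obtain ⟨a1, a2, ha⟩ := hh1 _ (H.brx hf)
  obtain ⟨b1, b2, hb⟩ := hh1 _ (H.brz hf)
  obtain ⟨k1, k2, hk⟩ := hh0 _ (H.br1 hf)
  have h1 := recon hf.2
  rw [ha, hb, hk] at h1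
  have h2 := of_C_mul_eq (by norm_num) h1
  have h3 : f = C (1 / 4) * (UU * (C k1 * QQ + C k2 * UU) + X 2 * (C a1 * P3 + C a2 * Q3)
     - X 0 * (C b1 * P3 + C b2 * Q3)) := by
    rw [h2]; norm_num
  subst h3
  have e : ∀ a b c : ℝ, _ := fun a b c => congrArg (eval ![a, b, c]) ha
  have e' : ∀ a b c : ℝ, _ := fun a b c => congrArg (eval ![a, b, c]) hk
  simp [lagr_x, Derivation.leibniz, pderiv_X, Pi.single_apply, pd_two] at e
  simp [lagr_one, Derivation.leibniz, pderiv_X, Pi.single_apply, pd_two] at e'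
  have f1 := e' 1 0 0
  have f2 := e' 0 0 1
  have f3 := e' 1 (1 / 2) 1
  have e1 := e 1 0 0
  have e2 := e 1 (1 / 2) 0
  have e3 := e 1 (-1 / 2) 0
  norm_num at e1 e2 e3 f1 f2 f3
  obtain rfl : k1 = 0 := by linarith
  obtain rfl : a1 = 0 := by linarith
  obtain rfl : b2 = 0 := by linarith
  obtain rfl : b1 = -a2 := by linarith
  obtain rfl : k2 = 4 * a2 := by linarith
  refine ⟨a2 / 4, ?_⟩
  have ha : (C a2 : PL) = 4 * C (a2 / 4) := by
    rw [← C_four, ← C_mul]; congr 1; ring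
  have hb : (4 : PL) * C (1 / 4) = 1 := by
    rw [← C_four, ← C_mul, ← C_1]; congr 1; norm_num
  simp only [C_0, C_neg, C_mul, C_four, ha]
  linear_combination (C (a2 / 4) * R4) * hb

lemma C_h3 {h : Submodule ℝ PL} (H : Good h)
    (hh1 : ∀ f ∈ h ⊓ Lgrade 1, ∃ a b : ℝ, f = C a * P3 + C b * Q3)
    (hh2 : ∀ f ∈ h ⊓ Lgrade 2, ∃ a : ℝ, f = C a * R4)
    {f : PL} (hf : f ∈ h ⊓ Lgrade 3) : f = 0 := by
  obtain ⟨a, ha⟩ := hh2 _ (H.brx hf)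
  obtain ⟨b, hb⟩ := hh2 _ (H.brz hf)
  obtain ⟨l1, l2, hl⟩ := hh1 _ (H.br1 hf)
  have h1 := recon hf.2
  rw [ha, hb, hl] at h1
  have h2 := of_C_mul_eq (by norm_num) h1
  have h3 : f = C (1 / 5) * (UU * (C l1 * P3 + C l2 * Q3) + X 2 * (C a * R4) - X 0 * (C b * R4)) := by
    rw [h2]; norm_num
  subst h3
  have e' : ∀ a b c : ℝ, _ := fun a b c => congrArg (eval ![a, b, c]) hl
  simp [lagr_one, Derivation.leibniz, pderiv_X, Pi.single_apply, pd_two, pd_four] at e'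
  have f1 := e' 1 0 0
  have f2 := e' 0 0 1
  have f3 := e' 1 (1 / 2) 0
  have f4 := e' 0 (1 / 2) 1
  norm_num at f1 f2 f3 f4
  obtain rfl : l1 = 0 := by linarith
  obtain rfl : l2 = 0 := by linarith
  obtain rfl : a = 0 := by linarith
  obtain rfl : b = 0 := by linarith
  simp

lemma caseC {h : Submodule ℝ PL} (H : Good h) {α : ℝ} (hα : 0 ≤ α) (hE : EE α ∈ h)
    (hh0 : ∀ f ∈ h ⊓ Lgrade 0, ∃ r t : ℝ, f = C r * QQ + C t * UU) :
    ∃ i, (∀ α : ℝ, i = Sum.inr α → 0 ≤ α) ∧ h = Tgt i := by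
  have hh1 : ∀ f ∈ h ⊓ Lgrade 1, ∃ a b : ℝ, f = C a * P3 + C b * Q3 := by
    intro f hf
    obtain ⟨s1, s2, hx⟩ := hh0 _ (H.brx hf)
    obtain ⟨t1, t2, hz⟩ := hh0 _ (H.brz hf)
    obtain ⟨r, s, h1, -⟩ := C_coef H hf hx hz
    exact ⟨r, s, h1⟩
  by_cases hU : UU ∈ h
  · have hQ : QQ ∈ h := by
      have := sub_mem hE (Good.cmul hU α)
      rwa [add_sub_cancel_right] at this
    by_cases hz : ∀ f ∈ h ⊓ Lgrade 1, f = 0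
    · have hz2 : ∀ f ∈ h ⊓ Lgrade 2, f = 0 := H.vanish (by norm_num) hz (by norm_num)
      have hz3 : ∀ f ∈ h ⊓ Lgrade 3, f = 0 := H.vanish (by norm_num) hz (by norm_num)
      refine ⟨Sum.inl 4, by simp, le_antisymm ?_ ?_⟩
      · apply H.le
        · exact Submodule.subset_span (by simp)
        · exact Submodule.subset_span (by simp)
        · exact Submodule.subset_span (by simp)
        · intro f hf
          obtain ⟨r, t, rfl⟩ := hh0 f hf
          rw [← smul_eq_C_mul, ← smul_eq_C_mul]
          refine add_mem ?_ ?_ <;>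
          exact Submodule.smul_mem _ _ (Submodule.subset_span (by simp))
        · intro f hf; rw [hz f hf]; exact Submodule.zero_mem _
        · intro f hf; rw [hz2 f hf]; exact Submodule.zero_mem _
        · exact hz3
      · apply Submodule.span_le.2
        rintro f (rfl | rfl | rfl | rfl | rfl)
        exacts [H.one, H.x, H.z, hQ, hU]
    · push Not at hz
      obtain ⟨f, hf, hf0⟩ := hz
      obtain ⟨r, s, rfl⟩ := hh1 f hf
      have hrs : r ^ 2 + s ^ 2 ≠ 0 := by
        intro h0
        have hr : r = 0 := by nlinarith [sq_nonneg r, sq_nonneg s]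
        have hs : s = 0 := by nlinarith [sq_nonneg r, sq_nonneg s]
        subst hr hs
        simp at hf0
      have k := H.closed _ hQ _ hf.1
      rw [lagr_add_right, lagr_C_right, lagr_C_right, brC1, brC2] at k
      have k2 : C r * Q3 - C s * P3 ∈ h := by
        apply Good.of_cmul (c := -2) (by norm_num)
        convert k using 1
        simp only [C_neg]
        ring
      have hP : P3 ∈ h := by
        apply Good.of_cmul hrs
        have := sub_mem (Good.cmul hf.1 r) (Good.cmul k2 s)
        convert this using 1
        simp only [C_add, C_pow]
        ring
      have hQ3 : Q3 ∈ h := by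
        apply Good.of_cmul hrs
        have := add_mem (Good.cmul hf.1 s) (Good.cmul k2 r)
        convert this using 1
        simp only [C_add, C_pow]
        ring
      have hR := H.closed _ hP _ hQ3
      rw [brC3] at hR
      refine ⟨Sum.inl 3, by simp, le_antisymm ?_ ?_⟩
      · apply H.le
        · exact Submodule.subset_span (by simp)
        · exact Submodule.subset_span (by simp)
        · exact Submodule.subset_span (by simp)
        · intro f hf
          obtain ⟨r, t, rfl⟩ := hh0 f hf
          rw [← smul_eq_C_mul, ← smul_eq_C_mul]
          refine add_mem ?_ ?_ <;>
          exact Submodule.smul_mem _ _ (Submodule.subset_span (by simp))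
        · intro f hf
          obtain ⟨r, t, rfl⟩ := hh1 f hf
          rw [← smul_eq_C_mul, ← smul_eq_C_mul]
          refine add_mem ?_ ?_ <;>
          exact Submodule.smul_mem _ _ (Submodule.subset_span (by simp))
        · intro f hf
          obtain ⟨r, rfl⟩ := C_h2 H hh0 hh1 hf
          rw [← smul_eq_C_mul]
          exact Submodule.smul_mem _ _ (Submodule.subset_span (by simp))
        · intro f hf
          exact C_h3 H hh1 (fun f hf => C_h2 H hh0 hh1 hf) hf
      · apply Submodule.span_le.2
        rintro f (rfl | rfl | rfl | rfl | rfl | rfl | rfl | rfl)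
        exacts [H.one, H.x, H.z, hQ, hU, hP, hQ3, hR]
  · have hh0' : ∀ f ∈ h ⊓ Lgrade 0, ∃ r : ℝ, f = C r * QQ + C (r * α) * UU := by
      intro f hf
      obtain ⟨r, t, rfl⟩ := hh0 f hf
      refine ⟨r, ?_⟩
      have ht : t = r * α := by
        by_contra ht
        apply hU
        apply Good.of_cmul (sub_ne_zero.2 ht)
        have := sub_mem hf.1 (Good.cmul hE r)
        convert this using 1
        simp only [C_sub, C_mul]
        ring
      rw [ht]
    have hz : ∀ f ∈ h ⊓ Lgrade 1, f = 0 := by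
      intro f hf
      obtain ⟨s1, hx⟩ := hh0' _ (H.brx hf)
      obtain ⟨t1, hz⟩ := hh0' _ (H.brz hf)
      obtain ⟨r, s, h1, h2, h3, h4, h5⟩ := C_coef H hf hx hz
      subst h2 h4
      have h6 : r ^ 2 + s ^ 2 = 0 := by linear_combination (r / 2) * h3 + s / 2 * h5
      have hr : r = 0 := by nlinarith [sq_nonneg r, sq_nonneg s]
      have hs : s = 0 := by nlinarith [sq_nonneg r, sq_nonneg s]
      rw [h1, hr, hs]
      simp
    have hz2 : ∀ f ∈ h ⊓ Lgrade 2, f = 0 := H.vanish (by norm_num) hz (by norm_num)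
    have hz3 : ∀ f ∈ h ⊓ Lgrade 3, f = 0 := H.vanish (by norm_num) hz (by norm_num)
    refine ⟨Sum.inr α, by rintro β hβ; cases hβ; exact hα, le_antisymm ?_ ?_⟩
    · apply H.le
      · exact Submodule.subset_span (by simp)
      · exact Submodule.subset_span (by simp)
      · exact Submodule.subset_span (by simp)
      · intro f hf
        obtain ⟨r, rfl⟩ := hh0' f hf
        have : C r * QQ + C (r * α) * UU = r • EE α := by
          simp only [smul_eq_C_mul, C_mul]; ring
        rw [this]
        exact Submodule.smul_mem _ _ (Submodule.subset_span (by simp))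
      · intro f hf; rw [hz f hf]; exact Submodule.zero_mem _
      · intro f hf; rw [hz2 f hf]; exact Submodule.zero_mem _
      · exact hz3
    · apply Submodule.span_le.2
      rintro f (rfl | rfl | rfl | rfl)
      exacts [H.one, H.x, H.z, hE]


abbrev GG (a b c d : ℝ) : PL := C a * X 0 ^ 2 + C b * (X 0 * X 2) + C c * X 2 ^ 2 + C d * UU

lemma brG (a1 a2 a3 a4 b1 b2 b3 b4 : ℝ) : lagr (GG a1 a2 a3 a4) (GG b1 b2 b3 b4) =
    GG (2 * (a1 * b2 - a2 * b1)) (4 * (a1 * b3 - a3 * b1)) (2 * (a2 * b3 - a3 * b2)) 0 := by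
  unfold lagr GG UU
  simp [Derivation.leibniz, pderiv_X, Pi.single_apply, pd_two, C_two, C_four]
  ring

lemma brL (a b c d α β : ℝ) : lagr (GG a b c d) (C α * X 0 + C β * X 2) =
    C (2 * a * β - b * α - d * α) * X 0 + C (b * β - 2 * c * α - d * β) * X 2 := by
  unfold lagr GG UU
  simp [Derivation.leibniz, pderiv_X, Pi.single_apply, pd_two, C_two, C_four]
  ring

lemma no_line {h : Submodule ℝ PL} (H : Good h)
    (hirr : ∀ W : Submodule ℝ PL, W ≤ Submodule.span ℝ ({X 0, X 2} : Set PL) →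
      (∀ u ∈ h ⊓ Lgrade 0, ∀ w ∈ W, lagr u w ∈ W) →
      W = ⊥ ∨ W = Submodule.span ℝ ({X 0, X 2} : Set PL))
    (α β : ℝ) (hne : α ≠ 0 ∨ β ≠ 0)
    (hc : ∀ a b c d, GG a b c d ∈ h → a * β ^ 2 - b * α * β + c * α ^ 2 = 0) : False := by
  have hpos : α ^ 2 + β ^ 2 ≠ 0 := by
    rcases hne with h1 | h1 <;> positivity
  have w1 : Submodule.span ℝ {C α * X 0 + C β * X 2} ≤
      Submodule.span ℝ ({X 0, X 2} : Set PL) := by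
    rw [Submodule.span_le, Set.singleton_subset_iff, ← smul_eq_C_mul, ← smul_eq_C_mul]
    exact add_mem (Submodule.smul_mem _ _ (Submodule.subset_span (by simp)))
      (Submodule.smul_mem _ _ (Submodule.subset_span (by simp)))
  have w2 : ∀ u ∈ h ⊓ Lgrade 0, ∀ w ∈ Submodule.span ℝ {C α * X 0 + C β * X 2},
      lagr u w ∈ Submodule.span ℝ {C α * X 0 + C β * X 2} := by
    intro u hu w hw
    obtain ⟨a, b, c, d, rfl⟩ := H.form_0 hu
    rw [Submodule.mem_span_singleton] at hw
    obtain ⟨t, rfl⟩ := hw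
    have h0 := hc a b c d hu.1
    rw [smul_eq_C_mul, lagr_C_right]
    refine Good.cmul ?_ t
    change lagr (GG a b c d) _ ∈ _
    rw [brL, Submodule.mem_span_singleton]
    refine ⟨(2 * α * β * (a - c) + b * (β ^ 2 - α ^ 2)) / (α ^ 2 + β ^ 2) - d, ?_⟩
    have k1 : 2 * a * β - b * α - d * α =
        ((2 * α * β * (a - c) + b * (β ^ 2 - α ^ 2)) / (α ^ 2 + β ^ 2) - d) * α := by
      field_simp
      linear_combination (2 * β) * h0
    have k2 : b * β - 2 * c * α - d * β =
        ((2 * α * β * (a - c) + b * (β ^ 2 - α ^ 2)) / (α ^ 2 + β ^ 2) - d) * β := by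
      field_simp
      linear_combination (-2 * α) * h0
    rw [k1, k2, smul_eq_C_mul, C_mul, C_mul]
    ring
  rcases hirr (Submodule.span ℝ {C α * X 0 + C β * X 2}) w1 w2 with h1 | h1
  · rw [Submodule.span_singleton_eq_bot] at h1
    have e : ∀ a b c : ℝ, _ := fun a b c => congrArg (eval ![a, b, c]) h1
    simp at e
    have e1 := e 1 0
    have e2 := e 0 1
    norm_num at e1 e2
    subst e1 e2
    simp at hne
  · have hx : (X 0 : PL) ∈ Submodule.span ℝ {C α * X 0 + C β * X 2} := by
      rw [h1]; exact Submodule.subset_span (by simp)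
    have hz : (X 2 : PL) ∈ Submodule.span ℝ {C α * X 0 + C β * X 2} := by
      rw [h1]; exact Submodule.subset_span (by simp)
    rw [Submodule.mem_span_singleton] at hx hz
    obtain ⟨t, ht⟩ := hx
    obtain ⟨r, hr⟩ := hz
    have e : ∀ a b c : ℝ, _ := fun a b c => congrArg (eval ![a, b, c]) ht
    have e' : ∀ a b c : ℝ, _ := fun a b c => congrArg (eval ![a, b, c]) hr
    simp at e e'
    have e1 := e 1 0
    have e2 := e 0 1
    have e3 := e' 0 1
    simp only [mul_one, mul_zero, add_zero, zero_add] at e1 e2 e3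
    have ht : t ≠ 0 := by rintro rfl; simp at e1
    have hb : β = 0 := by simpa [ht] using e2
    rw [hb] at e3; simp at e3

lemma Phi_G (c1 c2 c3 ε : ℝ) (hε : ε ≠ 0) (hc1 : c1 ≠ 0) (hD : ε ^ 2 * (4 * c1 * c3 - c2 ^ 2) = 4)
    (t d : ℝ) :
    Phi (-c2 * ε / 2) (ε * c1) (mul_ne_zero hε hc1) (GG (t * c1) (t * c2) (t * c3) d) =
      C (t * ε⁻¹) * QQ + C d * UU := by
  have h1 : GG (t * c1) (t * c2) (t * c3) d =
      t • (C c1 * X 0 ^ 2 + C c2 * (X 0 * X 2) + C c3 * X 2 ^ 2) + d • UU := by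
    simp only [GG, smul_eq_C_mul, C_mul]; ring
  rw [h1, map_add, map_smul, map_smul, Phi_U, smul_eq_C_mul, smul_eq_C_mul, C_mul, mul_assoc]
  congr 2
  rw [Phi_apply]
  simp only [map_add, map_mul, map_pow, subst_x, subst_z, subst_C]
  have h2 : (C (ε * c1)⁻¹ * (C c1 * (X 0 + C (-c2 * ε / 2) * X 2) ^ 2 +
      C c2 * ((X 0 + C (-c2 * ε / 2) * X 2) * (C (ε * c1) * X 2)) +
      C c3 * (C (ε * c1) * X 2) ^ 2) : PL) =
      C ((ε * c1)⁻¹ * c1) * X 0 ^ 2 +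
      C ((ε * c1)⁻¹ * (2 * c1 * (-c2 * ε / 2) + c2 * (ε * c1))) * (X 0 * X 2) +
      C ((ε * c1)⁻¹ * (c1 * (-c2 * ε / 2) ^ 2 + c2 * (-c2 * ε / 2) * (ε * c1) +
        c3 * (ε * c1) ^ 2)) * X 2 ^ 2 := by
    generalize (ε * c1)⁻¹ = m
    generalize ε * c1 = n
    generalize -c2 * ε / 2 = s
    simp only [C_mul, C_add, C_pow, C_two]
    ring
  have h3 : (ε * c1)⁻¹ * c1 = ε⁻¹ := by field_simp
  have h4 : (ε * c1)⁻¹ * (2 * c1 * (-c2 * ε / 2) + c2 * (ε * c1)) = 0 := by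
    rw [show 2 * c1 * (-c2 * ε / 2) + c2 * (ε * c1) = 0 by ring, mul_zero]
  have h5 : (ε * c1)⁻¹ * (c1 * (-c2 * ε / 2) ^ 2 + c2 * (-c2 * ε / 2) * (ε * c1) +
        c3 * (ε * c1) ^ 2) = ε⁻¹ := by
    rw [show c1 * (-c2 * ε / 2) ^ 2 + c2 * (-c2 * ε / 2) * (ε * c1) +
        c3 * (ε * c1) ^ 2 = c1 by linear_combination (c1 / 4) * hD, h3]
  rw [h3, h4, h5] at h2
  simp only [map_mul] at h2 ⊢
  rw [h2]
  simp only [C_0]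
  ring

lemma exists_main {h : Submodule ℝ PL} (H : Good h) (hfd : FiniteDimensional ℝ ↥h)
    (hirr : ∀ W : Submodule ℝ PL, W ≤ Submodule.span ℝ ({X 0, X 2} : Set PL) →
      (∀ u ∈ h ⊓ Lgrade 0, ∀ w ∈ W, lagr u w ∈ W) →
      W = ⊥ ∨ W = Submodule.span ℝ ({X 0, X 2} : Set PL)) :
    ∃ i, (∀ α : ℝ, i = Sum.inr α → 0 ≤ α) ∧
      ∃ F : PL ≃ₗ[ℝ] PL, IsAut F ∧ h.map (F : PL →ₗ[ℝ] PL) = Tgt i := by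
  by_cases hA : ∃ a1 a2 a3 a4 b1 b2 b3 b4 c1 c2 c3 c4 : ℝ, GG a1 a2 a3 a4 ∈ h ∧
      GG b1 b2 b3 b4 ∈ h ∧ GG c1 c2 c3 c4 ∈ h ∧
      c1 * (a2 * b3 - a3 * b2) - c2 * (a1 * b3 - a3 * b1) + c3 * (a1 * b2 - a2 * b1) ≠ 0
  · obtain ⟨a1, a2, a3, a4, b1, b2, b3, b4, c1, c2, c3, c4, ha, hb, hc, hd⟩ := hA
    have kab := H.closed _ ha _ hb
    have kbc := H.closed _ hb _ hc
    have kca := H.closed _ hc _ ha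
    rw [brG] at kab kbc kca
    have hzz : (X 2 ^ 2 : PL) ∈ h := by
      refine Good.of_cmul (mul_ne_zero two_ne_zero hd) ?_
      convert add_mem (add_mem (Good.cmul kab c1) (Good.cmul kbc a1)) (Good.cmul kca b1) using 1
      simp only [GG, C_mul, C_sub, C_add, C_two, C_four, C_0]
      ring
    have hxx : (X 0 ^ 2 : PL) ∈ h := by
      refine Good.of_cmul (mul_ne_zero two_ne_zero hd) ?_
      convert add_mem (add_mem (Good.cmul kab c3) (Good.cmul kbc a3)) (Good.cmul kca b3) using 1
      simp only [GG, C_mul, C_sub, C_add, C_two, C_four, C_0]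
      ring
    have hxz : (X 0 * X 2 : PL) ∈ h := by
      refine Good.of_cmul (mul_ne_zero (show (-4 : ℝ) ≠ 0 by norm_num) hd) ?_
      convert add_mem (add_mem (Good.cmul kab c2) (Good.cmul kbc a2)) (Good.cmul kca b2) using 1
      simp only [GG, C_mul, C_sub, C_add, C_two, C_four, C_0, C_neg]
      ring
    obtain ⟨i, hi⟩ := caseA H hfd hxx hxz hzz
    refine ⟨Sum.inl i, by simp, LinearEquiv.refl ℝ PL, refl_aut, ?_⟩
    rw [← hi]
    exact Submodule.map_id h
  push Not at hA
  by_cases hB : ∃ a1 a2 a3 a4 b1 b2 b3 b4 : ℝ, GG a1 a2 a3 a4 ∈ h ∧ GG b1 b2 b3 b4 ∈ h ∧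
      (a1 * b2 - a2 * b1 ≠ 0 ∨ a1 * b3 - a3 * b1 ≠ 0 ∨ a2 * b3 - a3 * b2 ≠ 0)
  · exfalso
    obtain ⟨a1, a2, a3, a4, b1, b2, b3, b4, ha, hb, hm⟩ := hB
    have hc := fun c1 c2 c3 c4 hc => hA a1 a2 a3 a4 b1 b2 b3 b4 c1 c2 c3 c4 ha hb hc
    have kab := H.closed _ ha _ hb
    rw [brG] at kab
    have k0 := hc _ _ _ _ kab
    generalize a1 * b2 - a2 * b1 = m12 at *
    generalize a1 * b3 - a3 * b1 = m13 at *
    generalize a2 * b3 - a3 * b2 = m23 at *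
    have k1 : m13 ^ 2 = m12 * m23 := by linarith
    by_cases h12 : m12 = 0
    · subst h12
      have h13 : m13 = 0 := by simpa using k1
      subst h13
      have h23 : m23 ≠ 0 := by simpa using hm
      refine no_line H hirr 0 1 (by simp) ?_
      intro c1 c2 c3 c4 hcc
      have := hc _ _ _ _ hcc
      have : c1 = 0 := by simpa [h23] using this
      simp [this]
    · refine no_line H hirr m12 m13 (Or.inl h12) ?_
      intro c1 c2 c3 c4 hcc
      have := hc _ _ _ _ hcc
      linear_combination m12 * this + c1 * k1
  push Not at hB
  have hC : ∃ c1 c2 c3 c4 : ℝ, GG c1 c2 c3 c4 ∈ h ∧ (c1 ≠ 0 ∨ c2 ≠ 0 ∨ c3 ≠ 0) := by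
    by_contra hC
    push Not at hC
    refine no_line H hirr 1 0 (by simp) ?_
    intro c1 c2 c3 c4 hcc
    obtain ⟨h1, h2, h3⟩ := hC _ _ _ _ hcc
    simp [h1, h2, h3]
  obtain ⟨c1, c2, c3, c4, he, hne⟩ := hC
  have hD : 0 < 4 * c1 * c3 - c2 ^ 2 := by
    by_contra hD
    push Not at hD
    have key : ∀ α β : ℝ, (α ≠ 0 ∨ β ≠ 0) → c1 * β ^ 2 - c2 * α * β + c3 * α ^ 2 = 0 → False := by
      intro α β hab h0
      refine no_line H hirr α β hab ?_
      intro g1 g2 g3 g4 hg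
      obtain ⟨m1, m2, m3⟩ := hB _ _ _ _ _ _ _ _ he hg
      rcases hne with hne | hne | hne
      · apply mul_left_cancel₀ hne
        linear_combination g1 * h0 - α * β * m1 + α ^ 2 * m2
      · apply mul_left_cancel₀ hne
        linear_combination g2 * h0 - β ^ 2 * m1 + α ^ 2 * m3
      · apply mul_left_cancel₀ hne
        linear_combination g3 * h0 - β ^ 2 * m2 + α * β * m3
    by_cases h1 : c1 = 0
    · exact key 0 1 (by simp) (by simp [h1])
    · refine key (2 * c1) (c2 + √(c2 ^ 2 - 4 * c1 * c3)) (Or.inl (by simpa using h1)) ?_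
      have := Real.sq_sqrt (show 0 ≤ c2 ^ 2 - 4 * c1 * c3 by linarith)
      linear_combination c1 * this
  have hc1 : c1 ≠ 0 := by
    rintro rfl
    nlinarith [sq_nonneg c2]
  obtain ⟨ε, hε, hεD, hεc⟩ : ∃ ε : ℝ, ε ≠ 0 ∧ ε ^ 2 * (4 * c1 * c3 - c2 ^ 2) = 4 ∧ 0 ≤ ε * c4 := by
    have hs := Real.sqrt_pos.2 hD
    have hsq := Real.sq_sqrt hD.le
    have h2 : (2 / √(4 * c1 * c3 - c2 ^ 2)) ^ 2 * (4 * c1 * c3 - c2 ^ 2) = 4 := by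
      rw [div_pow, hsq]
      field_simp
      norm_num
    have h3 : 0 < 2 / √(4 * c1 * c3 - c2 ^ 2) := by positivity
    rcases le_total 0 c4 with h4 | h4
    · exact ⟨_, h3.ne', h2, mul_nonneg h3.le h4⟩
    · refine ⟨-(2 / √(4 * c1 * c3 - c2 ^ 2)), (neg_neg_of_pos h3).ne, by rw [neg_sq, h2], ?_⟩
      exact mul_nonneg_of_nonpos_of_nonpos (neg_nonpos.2 h3.le) h4
  have H' := H.map_Phi (-c2 * ε / 2) (ε * c1) (mul_ne_zero hε hc1)
  have hE : EE (ε * c4) ∈ h.map (Phi (-c2 * ε / 2) (ε * c1) (mul_ne_zero hε hc1) : PL →ₗ[ℝ] PL) := by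
    apply Good.of_cmul (inv_ne_zero hε)
    refine ⟨_, he, ?_⟩
    have := Phi_G c1 c2 c3 ε hε hc1 hεD 1 c4
    simp only [one_mul] at this
    refine this.trans ?_
    have hh : (C ε⁻¹ : PL) * C ε = 1 := by rw [← C_mul, inv_mul_cancel₀ hε, C_1]
    simp only [EE, C_mul]
    linear_combination (-C c4 * UU) * hh
  obtain ⟨i, hi, hT⟩ := caseC H' hεc hE (by
    intro f hf
    rw [← (Phi_aut _ _ _).map_inf] at hf
    obtain ⟨g, hg, rfl⟩ := hf
    obtain ⟨g1, g2, g3, g4, rfl⟩ := H.form_0 hg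
    obtain ⟨m1, m2, m3⟩ := hB _ _ _ _ _ _ _ _ he hg.1
    have k1 : g1 = g1 / c1 * c1 := by field_simp
    have k2 : g2 = g1 / c1 * c2 := by field_simp; linarith
    have k3 : g3 = g1 / c1 * c3 := by field_simp; linarith
    generalize g1 / c1 = t at *
    subst k1 k2 k3
    exact ⟨_, _, Phi_G c1 c2 c3 ε hε hc1 hεD t g4⟩)
  exact ⟨i, hi, _, Phi_aut _ _ _, hT⟩


/-- Let `h ⊆ L` be a finite-dimensional graded Lie subalgebra for the
Lagrange bracket with `h ∩ L_{−2} = ℝ·1`, `h ∩ L_{−1} = span{x,z}`, such that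
`h₀ = h ∩ L₀` acts irreducibly on `span{x,z}`.  Then `h` is isomorphic, by a Lie algebra
isomorphism respecting the grading, to exactly one of the six graded subalgebras `1°`–`6°`
(with a unique parameter `α ≥ 0` in case `6°`). -/
theorem stmt15 (h : Submodule ℝ PL) (hfd : FiniteDimensional ℝ ↥h)
    (hclosed : ∀ u ∈ h, ∀ v ∈ h, lagr u v ∈ h)
    (hgraded : h = ⨆ p : ℤ, h ⊓ Lgrade p)
    (hm2 : h ⊓ Lgrade (-2) = Submodule.span ℝ ({1} : Set PL))
    (hm1 : h ⊓ Lgrade (-1) = Submodule.span ℝ ({X 0, X 2} : Set PL))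
    (hirr : ∀ W : Submodule ℝ PL, W ≤ Submodule.span ℝ ({X 0, X 2} : Set PL) →
      (∀ u ∈ h ⊓ Lgrade 0, ∀ w ∈ W, lagr u w ∈ W) →
      W = ⊥ ∨ W = Submodule.span ℝ ({X 0, X 2} : Set PL)) :
    ∃! i : Fin 5 ⊕ ℝ,
      (∀ α : ℝ, i = Sum.inr α → 0 ≤ α) ∧
      ∃ φ : ↥h ≃ₗ[ℝ] ↥(Tgt i),
        (∀ u v w : ↥h, (w : PL) = lagr (u : PL) (v : PL) →
          (φ w : PL) = lagr (φ u : PL) (φ v : PL)) ∧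
        (∀ p : ℤ, ∀ u : ↥h, ((u : PL) ∈ Lgrade p ↔ (φ u : PL) ∈ Lgrade p)) := by
  have H : Good h := ⟨hclosed, hgraded, hm2, hm1⟩
  obtain ⟨i, hi, F, hF, hT⟩ := exists_main H hfd hirr
  obtain ⟨φ, hφ1, hφ2⟩ := exists_iso hF hT
  refine ⟨i, ⟨hi, φ, hφ1, hφ2⟩, ?_⟩
  rintro j ⟨hj, ψ, hψ1, hψ2⟩
  exact iso_unique hclosed hj hi ψ hψ1 hψ2 φ hφ1 hφ2
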